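/- There exist universal constants C_b > 0 and C > 0 such that the following holds for γ ∈ [1/2,1) and δ ∈ (0,1). For any fixed (s,a,b) ∈ 𝒮×𝒜×ℬ, with probability at least 1−δ over the dataset, on the event N(s,a,b) ≥ 1, simultaneously for every Ṽ : 𝒮 → [0, 1/(1−γ)] with min{ ‖Ṽ − V_pe^{−⋆}‖_∞, ‖Ṽ − V_pe^{+⋆}‖_∞ } ≤ 1/N one has: (i) |(P̂(·|s,a,b) − P(·|s,a,b))Ṽ| ≤ C·[ √( Var_{P̂(·|s,a,b)}(Ṽ)·log(N/((1−γ)δ)) / N(s,a,b) ) + log(N/((1−γ)δ)) / ((1−γ)N(s,a,b)) ]; and (ii) Var_{P̂(·|s,a,b)}(Ṽ) ≤ 2·Var_{P(·|s,a,b)}(Ṽ) + C·log(N/((1−γ)δ)) / ((1−γ)²N(s,a,b)). -/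

import Mathlib

open scoped BigOperators ENNReal Classical

noncomputable section

namespace ZSMG

variable {𝒮 𝒜 ℬ : Type} [Fintype 𝒮] [Fintype 𝒜] [Fintype ℬ]
  [DecidableEq 𝒮] [DecidableEq 𝒜] [DecidableEq ℬ]

/-- Expectation of `V : 𝒮 → ℝ` under the (sub)probability vector `p`. -/
def Pexp (p V : 𝒮 → ℝ) : ℝ := ∑ s', p s' * V s'

/-- Variance of `V` under `p`: `Var_p(V) = p(V∘V) − (pV)²`. -/
def varP (p V : 𝒮 → ℝ) : ℝ := Pexp p (fun s => V s * V s) - (Pexp p V) ^ 2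

/-- Payoff of mixed strategies `w, z` in the matrix game `M`. -/
def pay (M : 𝒜 → ℬ → ℝ) (w : 𝒜 → ℝ) (z : ℬ → ℝ) : ℝ :=
  ∑ a, ∑ b, w a * z b * M a b

/-- Value function associated with a Q-function: minimax value at each state. -/
def valQ (Q : 𝒮 → 𝒜 → ℬ → ℝ) (s : 𝒮) : ℝ :=
  ⨆ w : stdSimplex ℝ 𝒜, ⨅ z : stdSimplex ℝ ℬ, pay (Q s) w.1 z.1

/-- Sup norm over states. -/
def supNormS (f : 𝒮 → ℝ) : ℝ := ⨆ s, |f s|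

/-- Sup norm over state-action triples. -/
def supNormQ (f : 𝒮 → 𝒜 → ℬ → ℝ) : ℝ := ⨆ s, ⨆ a, ⨆ b, |f s a b|

/-- The Bernstein-style penalty `β(s,a,b;V)`; `n` is the count `N(s,a,b)` and
`p` is the row `P̂(·|s,a,b)` of the empirical kernel. -/
def penalty (γ δ Cb : ℝ) (N n : ℕ) (p V : 𝒮 → ℝ) : ℝ :=
  (if n = 0 then 1 / (1 - γ)
   else
     min
       (max (Real.sqrt (Cb * Real.log ((N : ℝ) / ((1 - γ) * δ)) * varP p V / (n : ℝ)))
         (2 * Cb * Real.log ((N : ℝ) / ((1 - γ) * δ)) / ((1 - γ) * (n : ℝ))))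
       (1 / (1 - γ))) + 4 / (N : ℝ)

/-- The pessimistic Bellman operator for the max-player. -/
def TpeMinus (γ δ Cb : ℝ) (N : ℕ) (n : 𝒮 → 𝒜 → ℬ → ℕ)
    (Ph : 𝒮 → 𝒜 → ℬ → 𝒮 → ℝ) (rh : 𝒮 → 𝒜 → ℬ → ℝ)
    (Q : 𝒮 → 𝒜 → ℬ → ℝ) : 𝒮 → 𝒜 → ℬ → ℝ := fun s a b =>
  max (rh s a b + γ * Pexp (Ph s a b) (valQ Q)
        - penalty γ δ Cb N (n s a b) (Ph s a b) (valQ Q)) 0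

/-- The pessimistic Bellman operator for the min-player. -/
def TpePlus (γ δ Cb : ℝ) (N : ℕ) (n : 𝒮 → 𝒜 → ℬ → ℕ)
    (Ph : 𝒮 → 𝒜 → ℬ → 𝒮 → ℝ) (rh : 𝒮 → 𝒜 → ℬ → ℝ)
    (Q : 𝒮 → 𝒜 → ℬ → ℝ) : 𝒮 → 𝒜 → ℬ → ℝ := fun s a b =>
  min (rh s a b + γ * Pexp (Ph s a b) (valQ Q)
        + penalty γ δ Cb N (n s a b) (Ph s a b) (valQ Q)) (1 / (1 - γ))

/-- Count `N(s,a,b)` of occurrences of `(s,a,b)` in the dataset `D`. -/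
def cnt {N : ℕ} (D : Fin N → 𝒮 × 𝒜 × ℬ × 𝒮) (s : 𝒮) (a : 𝒜) (b : ℬ) : ℕ :=
  (Finset.univ.filter fun i => (D i).1 = s ∧ (D i).2.1 = a ∧ (D i).2.2.1 = b).card

/-- Count of full transitions `(s,a,b,s')` in the dataset `D`. -/
def cntT {N : ℕ} (D : Fin N → 𝒮 × 𝒜 × ℬ × 𝒮) (s : 𝒮) (a : 𝒜) (b : ℬ) (s' : 𝒮) : ℕ :=
  (Finset.univ.filter fun i => D i = (s, a, b, s')).card

/-- Empirical transition kernel `P̂(·|s,a,b)` built from the dataset. -/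
def Phat {N : ℕ} (D : Fin N → 𝒮 × 𝒜 × ℬ × 𝒮) (s : 𝒮) (a : 𝒜) (b : ℬ) : 𝒮 → ℝ := fun s' =>
  if cnt D s a b = 0 then ((Fintype.card 𝒮 : ℝ))⁻¹
  else (cntT D s a b s' : ℝ) / (cnt D s a b : ℝ)

/-- Empirical reward `r̂` built from the dataset. -/
def rhat {N : ℕ} (r : 𝒮 → 𝒜 → ℬ → ℝ) (D : Fin N → 𝒮 × 𝒜 × ℬ × 𝒮)
    (s : 𝒮) (a : 𝒜) (b : ℬ) : ℝ :=
  if cnt D s a b = 0 then 0 else r s a b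

/-- Number of iterations `T = ⌈log(N/(1−γ))/log(1/γ)⌉` of VI-LCB-Game. -/
def Titer (γ : ℝ) (N : ℕ) : ℕ := ⌈Real.log ((N : ℝ) / (1 - γ)) / Real.log (1 / γ)⌉₊

/-- `Q_pe^− = Q⁻_T` produced by VI-LCB-Game on the dataset `D`. -/
def QpeMinus (γ δ Cb : ℝ) (r : 𝒮 → 𝒜 → ℬ → ℝ) {N : ℕ}
    (D : Fin N → 𝒮 × 𝒜 × ℬ × 𝒮) : 𝒮 → 𝒜 → ℬ → ℝ :=
  (TpeMinus γ δ Cb N (cnt D) (Phat D) (rhat r D))^[Titer γ N] (fun _ _ _ => 0)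

/-- `Q_pe^+ = Q⁺_T` produced by VI-LCB-Game on the dataset `D`. -/
def QpePlus (γ δ Cb : ℝ) (r : 𝒮 → 𝒜 → ℬ → ℝ) {N : ℕ}
    (D : Fin N → 𝒮 × 𝒜 × ℬ × 𝒮) : 𝒮 → 𝒜 → ℬ → ℝ :=
  (TpePlus γ δ Cb N (cnt D) (Phat D) (rhat r D))^[Titer γ N] (fun _ _ _ => 1 / (1 - γ))

/-- `(w,z)` is a (mixed) Nash equilibrium / saddle point of the matrix game `M`. -/
def IsMatrixNash (M : 𝒜 → ℬ → ℝ) (w : 𝒜 → ℝ) (z : ℬ → ℝ) : Prop :=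
  w ∈ stdSimplex ℝ 𝒜 ∧ z ∈ stdSimplex ℝ ℬ ∧
    (∀ w' ∈ stdSimplex ℝ 𝒜, pay M w' z ≤ pay M w z) ∧
    (∀ z' ∈ stdSimplex ℝ ℬ, pay M w z ≤ pay M w z')

/-- `μ` is a possible max-player output of the algorithm, given the final Q-estimate `Q`. -/
def IsOutputMax (Q : 𝒮 → 𝒜 → ℬ → ℝ) (μ : 𝒮 → 𝒜 → ℝ) : Prop :=
  ∀ s, ∃ z, IsMatrixNash (Q s) (μ s) z

/-- `ν` is a possible min-player output of the algorithm, given the final Q-estimate `Q`. -/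
def IsOutputMin (Q : 𝒮 → 𝒜 → ℬ → ℝ) (ν : 𝒮 → ℬ → ℝ) : Prop :=
  ∀ s, ∃ w, IsMatrixNash (Q s) w (ν s)

/-- `μ` is a stationary (Markov) policy. -/
def IsPolicy (μ : 𝒮 → 𝒜 → ℝ) : Prop := ∀ s, μ s ∈ stdSimplex ℝ 𝒜

/-- `P` is a probability transition kernel. -/
def IsKernel (P : 𝒮 → 𝒜 → ℬ → 𝒮 → ℝ) : Prop := ∀ s a b, P s a b ∈ stdSimplex ℝ 𝒮

/-- `r` is a reward function with values in `[0,1]`. -/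
def IsReward (r : 𝒮 → 𝒜 → ℬ → ℝ) : Prop := ∀ s a b, r s a b ∈ Set.Icc (0 : ℝ) 1

/-- `d` is a probability distribution over `𝒮 × 𝒜 × ℬ`. -/
def IsDist3 (d : 𝒮 → 𝒜 → ℬ → ℝ) : Prop :=
  (∀ s a b, 0 ≤ d s a b) ∧ (∑ s, ∑ a, ∑ b, d s a b) = 1

/-- Transition matrix `P^{μ,ν}` of the product policy `μ × ν`. -/
def Pmat (P : 𝒮 → 𝒜 → ℬ → 𝒮 → ℝ) (μ : 𝒮 → 𝒜 → ℝ) (ν : 𝒮 → ℬ → ℝ) :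
    Matrix 𝒮 𝒮 ℝ :=
  Matrix.of fun s s' => ∑ a, ∑ b, μ s a * ν s b * P s a b s'

/-- Reward vector `r^{μ,ν}` of the product policy `μ × ν`. -/
def rPol (r : 𝒮 → 𝒜 → ℬ → ℝ) (μ : 𝒮 → 𝒜 → ℝ) (ν : 𝒮 → ℬ → ℝ) : 𝒮 → ℝ :=
  fun s => ∑ a, ∑ b, μ s a * ν s b * r s a b

/-- Value function `V^{μ,ν} = (I − γP^{μ,ν})⁻¹ r^{μ,ν}`. -/
def Vpol (γ : ℝ) (P : 𝒮 → 𝒜 → ℬ → 𝒮 → ℝ) (r : 𝒮 → 𝒜 → ℬ → ℝ)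
    (μ : 𝒮 → 𝒜 → ℝ) (ν : 𝒮 → ℬ → ℝ) : 𝒮 → ℝ :=
  Matrix.mulVec ((1 : Matrix 𝒮 𝒮 ℝ) - γ • Pmat P μ ν)⁻¹ (rPol r μ ν)

/-- `V^{μ,⋆}(s) = min_ν V^{μ,ν}(s)`. -/
def VmuStar (γ : ℝ) (P : 𝒮 → 𝒜 → ℬ → 𝒮 → ℝ) (r : 𝒮 → 𝒜 → ℬ → ℝ)
    (μ : 𝒮 → 𝒜 → ℝ) : 𝒮 → ℝ := fun s =>
  ⨅ ν : {ν : 𝒮 → ℬ → ℝ // IsPolicy ν}, Vpol γ P r μ ν.1 s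

/-- `V^{⋆,ν}(s) = max_μ V^{μ,ν}(s)`. -/
def VstarNu (γ : ℝ) (P : 𝒮 → 𝒜 → ℬ → 𝒮 → ℝ) (r : 𝒮 → 𝒜 → ℬ → ℝ)
    (ν : 𝒮 → ℬ → ℝ) : 𝒮 → ℝ := fun s =>
  ⨆ μ : {μ : 𝒮 → 𝒜 → ℝ // IsPolicy μ}, Vpol γ P r μ.1 ν s

/-- `Q^{μ,ν}(s,a,b) = r(s,a,b) + γ P(·|s,a,b) V^{μ,ν}`. -/
def Qpol (γ : ℝ) (P : 𝒮 → 𝒜 → ℬ → 𝒮 → ℝ) (r : 𝒮 → 𝒜 → ℬ → ℝ)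
    (μ : 𝒮 → 𝒜 → ℝ) (ν : 𝒮 → ℬ → ℝ) : 𝒮 → 𝒜 → ℬ → ℝ := fun s a b =>
  r s a b + γ * Pexp (P s a b) (Vpol γ P r μ ν)

/-- `Q^{μ,⋆}(s,a,b) = min_ν Q^{μ,ν}(s,a,b)`. -/
def QmuStar (γ : ℝ) (P : 𝒮 → 𝒜 → ℬ → 𝒮 → ℝ) (r : 𝒮 → 𝒜 → ℬ → ℝ)
    (μ : 𝒮 → 𝒜 → ℝ) : 𝒮 → 𝒜 → ℬ → ℝ := fun s a b =>
  ⨅ ν : {ν : 𝒮 → ℬ → ℝ // IsPolicy ν}, Qpol γ P r μ ν.1 s a b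

/-- `Q^{⋆,ν}(s,a,b) = max_μ Q^{μ,ν}(s,a,b)`. -/
def QstarNu (γ : ℝ) (P : 𝒮 → 𝒜 → ℬ → 𝒮 → ℝ) (r : 𝒮 → 𝒜 → ℬ → ℝ)
    (ν : 𝒮 → ℬ → ℝ) : 𝒮 → 𝒜 → ℬ → ℝ := fun s a b =>
  ⨆ μ : {μ : 𝒮 → 𝒜 → ℝ // IsPolicy μ}, Qpol γ P r μ.1 ν s a b

/-- `(μs, νs)` is a Nash equilibrium of the Markov game. -/
def IsNashPair (γ : ℝ) (P : 𝒮 → 𝒜 → ℬ → 𝒮 → ℝ) (r : 𝒮 → 𝒜 → ℬ → ℝ)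
    (μs : 𝒮 → 𝒜 → ℝ) (νs : 𝒮 → ℬ → ℝ) : Prop :=
  IsPolicy μs ∧ IsPolicy νs ∧
    (∀ μ, IsPolicy μ → ∀ s, Vpol γ P r μ νs s ≤ Vpol γ P r μs νs s) ∧
    (∀ ν, IsPolicy ν → ∀ s, Vpol γ P r μs νs s ≤ Vpol γ P r μs ν s)

/-- `V(ρ) = Σ_s ρ(s) V(s)`. -/
def wAvg (ρ V : 𝒮 → ℝ) : ℝ := ∑ s, ρ s * V s

/-- Discounted occupancy measure `d^{μ,ν}(s;ρ) = (1−γ) ρᵀ(I−γP^{μ,ν})⁻¹`. -/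
def dOcc (γ : ℝ) (P : 𝒮 → 𝒜 → ℬ → 𝒮 → ℝ) (μ : 𝒮 → 𝒜 → ℝ) (ν : 𝒮 → ℬ → ℝ)
    (ρ : 𝒮 → ℝ) : 𝒮 → ℝ := fun s =>
  (1 - γ) * Matrix.vecMul ρ ((1 : Matrix 𝒮 𝒮 ℝ) - γ • Pmat P μ ν)⁻¹ s

/-- `d^{μ,ν}(s,a,b;ρ) = d^{μ,ν}(s;ρ) μ(a|s) ν(b|s)`. -/
def dOcc3 (γ : ℝ) (P : 𝒮 → 𝒜 → ℬ → 𝒮 → ℝ) (μ : 𝒮 → 𝒜 → ℝ) (ν : 𝒮 → ℬ → ℝ)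
    (ρ : 𝒮 → ℝ) : 𝒮 → 𝒜 → ℬ → ℝ := fun s a b =>
  dOcc γ P μ ν ρ s * μ s a * ν s b

/-- Clipped unilateral concentrability coefficient `C⋆_clipped` (in `ℝ≥0∞`;
note that in `ℝ≥0∞` one has `x/0 = ∞` for `x ≠ 0` and `0/0 = 0`, matching the
convention of the paper). -/
def clipCoeff (γ : ℝ) (P : 𝒮 → 𝒜 → ℬ → 𝒮 → ℝ) (ρ : 𝒮 → ℝ) (d : 𝒮 → 𝒜 → ℬ → ℝ)
    (μs : 𝒮 → 𝒜 → ℝ) (νs : 𝒮 → ℬ → ℝ) : ℝ≥0∞ :=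
  max
    (⨆ (μ : {μ : 𝒮 → 𝒜 → ℝ // IsPolicy μ}) (s : 𝒮) (a : 𝒜) (b : ℬ),
      ENNReal.ofReal
          (min (dOcc3 γ P μ.1 νs ρ s a b)
            ((Fintype.card 𝒮 * (Fintype.card 𝒜 + Fintype.card ℬ) : ℝ))⁻¹) /
        ENNReal.ofReal (d s a b))
    (⨆ (ν : {ν : 𝒮 → ℬ → ℝ // IsPolicy ν}) (s : 𝒮) (a : 𝒜) (b : ℬ),
      ENNReal.ofReal
          (min (dOcc3 γ P μs ν.1 ρ s a b)
            ((Fintype.card 𝒮 * (Fintype.card 𝒜 + Fintype.card ℬ) : ℝ))⁻¹) /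
        ENNReal.ofReal (d s a b))

/-- Probability weight of an individual dataset under `(d_b, P)`. -/
def dsWeight {N : ℕ} (d : 𝒮 → 𝒜 → ℬ → ℝ) (P : 𝒮 → 𝒜 → ℬ → 𝒮 → ℝ)
    (D : Fin N → 𝒮 × 𝒜 × ℬ × 𝒮) : ℝ :=
  ∏ i, d (D i).1 (D i).2.1 (D i).2.2.1 * P (D i).1 (D i).2.1 (D i).2.2.1 (D i).2.2.2

/-- Probability of an event over the offline dataset. -/
def dsProb {N : ℕ} (d : 𝒮 → 𝒜 → ℬ → ℝ) (P : 𝒮 → 𝒜 → ℬ → 𝒮 → ℝ)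
    (E : Set (Fin N → 𝒮 × 𝒜 × ℬ × 𝒮)) : ℝ :=
  ∑ D : Fin N → 𝒮 × 𝒜 × ℬ × 𝒮, E.indicator (dsWeight d P) D

/-- Expectation of a function of the offline dataset. -/
def dsExp {N : ℕ} (d : 𝒮 → 𝒜 → ℬ → ℝ) (P : 𝒮 → 𝒜 → ℬ → 𝒮 → ℝ)
    (g : (Fin N → 𝒮 × 𝒜 × ℬ × 𝒮) → ℝ) : ℝ :=
  ∑ D : Fin N → 𝒮 × 𝒜 × ℬ × 𝒮, dsWeight d P D * g D

/-- Dirac (deterministic) policy for the min-player. -/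
def diracB (f : 𝒮 → ℬ) : 𝒮 → ℬ → ℝ := fun s b => if b = f s then 1 else 0

/-- Binomial pmf. -/
def binomPMF (n : ℕ) (p : ℝ) (k : ℕ) : ℝ :=
  (n.choose k : ℝ) * p ^ k * (1 - p) ^ (n - k)

/-- Probability of a set of outcomes under a `Binomial(n,p)` distribution. -/
def binomProb (n : ℕ) (p : ℝ) (E : Set ℕ) : ℝ :=
  ∑ k ∈ Finset.range (n + 1), E.indicator (binomPMF n p) k

/-- Weight of an i.i.d. sample from a distribution on a finite set. -/
def iidWeight {𝒳 : Type} {N : ℕ} (d : 𝒳 → ℝ) (ω : Fin N → 𝒳) : ℝ := ∏ i, d (ω i)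

/-- Probability of an event for `N` i.i.d. draws from `d`. -/
def iidProb {𝒳 : Type} [Fintype 𝒳] {N : ℕ} (d : 𝒳 → ℝ) (E : Set (Fin N → 𝒳)) : ℝ :=
  ∑ ω : Fin N → 𝒳, E.indicator (iidWeight d) ω

/-- Number of occurrences of `x` in the sample `ω`. -/
def iidCount {𝒳 : Type} [DecidableEq 𝒳] {N : ℕ} (ω : Fin N → 𝒳) (x : 𝒳) : ℕ :=
  (Finset.univ.filter fun i => ω i = x).card

/-- Transition kernel of the hard instance `ℳ𝒢_θ`. -/
def hardP {S A B : ℕ} (θ : Fin A → ℝ) : Fin S → Fin A → Fin B → Fin S → ℝ :=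
  fun s a b s' =>
    if s.val = 0 ∧ b.val = 0 then
      θ a * (if s'.val = 0 then 1 else 0) + (1 - θ a) * (if s'.val = 1 then 1 else 0)
    else if s' = s then 1 else 0

/-- Reward of the hard instance: `r(s,a,b) = 1{s = 0}`. -/
def hardR {S A B : ℕ} : Fin S → Fin A → Fin B → ℝ := fun s _ _ => if s.val = 0 then 1 else 0

end ZSMG

/-!
The proof is by leaving one triple out. The penalised Bellman operators are `γ`-contractions, and
off `(s, a, b)` they do not look at the next states observed at `(s, a, b)`. Once those next states
are erased from the dataset, a fixed point `Q` is therefore determined up to `1 / N` by the value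
`Q s a b` rounded to a multiple of `1 / N`, so that about `N / (1 - γ)` `Q`-functions, all
independent of the erased next states, approximate every possible fixed point. Bernstein's
inequality conditionally on the erased dataset, applied to each of them and to its squared
deviation, and a union bound give the two estimates on this grid; they transfer to vectors within
`1 / N` of a fixed-point value at the cost of constants.
-/

namespace ZSMG

/-! ### Expectation and variance under a probability vector -/

section Moments

variable {𝒮 : Type} [Fintype 𝒮] {p f g U V : 𝒮 → ℝ}

lemma Pexp_add (p f g : 𝒮 → ℝ) : Pexp p (fun t => f t + g t) = Pexp p f + Pexp p g :=
  dotProduct_add p f g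

lemma Pexp_sub (p f g : 𝒮 → ℝ) : Pexp p (fun t => f t - g t) = Pexp p f - Pexp p g :=
  dotProduct_sub p f g

lemma Pexp_neg (p f : 𝒮 → ℝ) : Pexp p (fun t => -f t) = -Pexp p f :=
  dotProduct_neg p f

lemma Pexp_const_mul (p f : 𝒮 → ℝ) (c : ℝ) : Pexp p (fun t => c * f t) = c * Pexp p f :=
  dotProduct_smul c p f

lemma Pexp_const (hp : p ∈ stdSimplex ℝ 𝒮) (c : ℝ) : Pexp p (fun _ => c) = c := by
  simp [Pexp, ← Finset.sum_mul, hp.2]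

lemma Pexp_mono (hp : p ∈ stdSimplex ℝ 𝒮) (h : ∀ t, f t ≤ g t) : Pexp p f ≤ Pexp p g :=
  Finset.sum_le_sum fun t _ => mul_le_mul_of_nonneg_left (h t) (hp.1 t)

lemma Pexp_nonneg (hp : p ∈ stdSimplex ℝ 𝒮) (h : ∀ t, 0 ≤ f t) : 0 ≤ Pexp p f :=
  Finset.sum_nonneg fun t _ => mul_nonneg (hp.1 t) (h t)

lemma Pexp_mem_Icc (hp : p ∈ stdSimplex ℝ 𝒮) {l u : ℝ} (h : ∀ t, f t ∈ Set.Icc l u) :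
    Pexp p f ∈ Set.Icc l u :=
  ⟨by simpa only [Pexp_const hp] using Pexp_mono (f := fun _ => l) hp fun t => (h t).1,
    by simpa only [Pexp_const hp] using Pexp_mono (g := fun _ => u) hp fun t => (h t).2⟩

lemma abs_Pexp_sub_le_dist (hp : p ∈ stdSimplex ℝ 𝒮) (f g : 𝒮 → ℝ) :
    |Pexp p f - Pexp p g| ≤ dist f g := by
  rw [← Pexp_sub]
  exact abs_le.2 (Pexp_mem_Icc hp fun t => abs_le.1 (dist_le_pi_dist f g t))

lemma abs_sub_Pexp_le (hp : p ∈ stdSimplex ℝ 𝒮) {H : ℝ} (hf : ∀ t, f t ∈ Set.Icc 0 H) (t : 𝒮) :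
    |f t - Pexp p f| ≤ H :=
  (abs_sub_le_of_le_of_le (hf t).1 (hf t).2 (Pexp_mem_Icc hp hf).1 (Pexp_mem_Icc hp hf).2).trans_eq
    (sub_zero H)

lemma Pexp_sq_sub (hp : p ∈ stdSimplex ℝ 𝒮) (f : 𝒮 → ℝ) (c : ℝ) :
    Pexp p (fun t => (f t - c) ^ 2) = varP p f + (Pexp p f - c) ^ 2 := by
  have expand : (fun t => (f t - c) ^ 2) = fun t => (f t * f t - 2 * c * f t) + c ^ 2 := by
    ext t; ring
  rw [expand, Pexp_add, Pexp_sub, Pexp_const_mul, Pexp_const hp, varP]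
  ring

lemma varP_eq_Pexp_sq_sub (hp : p ∈ stdSimplex ℝ 𝒮) (f : 𝒮 → ℝ) :
    varP p f = Pexp p (fun t => (f t - Pexp p f) ^ 2) := by
  rw [Pexp_sq_sub hp, sub_self, sq, mul_zero, add_zero]

lemma varP_le_Pexp_sq_sub (hp : p ∈ stdSimplex ℝ 𝒮) (f : 𝒮 → ℝ) (c : ℝ) :
    varP p f ≤ Pexp p (fun t => (f t - c) ^ 2) := by
  rw [Pexp_sq_sub hp]
  exact le_add_of_nonneg_right (sq_nonneg _)

lemma varP_nonneg (hp : p ∈ stdSimplex ℝ 𝒮) (f : 𝒮 → ℝ) : 0 ≤ varP p f := by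
  rw [varP_eq_Pexp_sq_sub hp]
  exact Pexp_nonneg hp fun t => sq_nonneg _

lemma varP_neg (p f : 𝒮 → ℝ) : varP p (fun t => -f t) = varP p f := by
  simp only [varP, Pexp_neg, neg_mul_neg, neg_sq]

lemma varP_add_const (hp : p ∈ stdSimplex ℝ 𝒮) (f : 𝒮 → ℝ) (c : ℝ) :
    varP p (fun t => f t + c) = varP p f := by
  simp only [varP_eq_Pexp_sq_sub hp, Pexp_add, Pexp_const hp, add_sub_add_right_eq_sub]

lemma varP_le_of_dist_le (hp : p ∈ stdSimplex ℝ 𝒮) {ε : ℝ} (h : dist f g ≤ ε) :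
    varP p f ≤ 5 / 4 * varP p g + 5 * ε ^ 2 := by
  have pointwise (t : 𝒮) :
      (f t - Pexp p g) ^ 2 ≤ 5 / 4 * (g t - Pexp p g) ^ 2 + 5 * ε ^ 2 := by
    have hfg : |f t - g t| ≤ ε := (dist_le_pi_dist f g t).trans h
    have hsq : (f t - g t) ^ 2 ≤ ε ^ 2 := sq_le_sq' (neg_le_of_abs_le hfg) (le_of_abs_le hfg)
    nlinarith [sq_nonneg ((g t - Pexp p g) / 2 - 2 * (f t - g t))]
  calc varP p f ≤ Pexp p (fun t => (f t - Pexp p g) ^ 2) := varP_le_Pexp_sq_sub hp f _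
    _ ≤ Pexp p (fun t => 5 / 4 * (g t - Pexp p g) ^ 2 + 5 * ε ^ 2) := Pexp_mono hp pointwise
    _ = 5 / 4 * varP p g + 5 * ε ^ 2 := by
      rw [Pexp_add, Pexp_const_mul, Pexp_const hp, ← varP_eq_Pexp_sq_sub hp]

lemma varP_sq_sub_Pexp_le (hp : p ∈ stdSimplex ℝ 𝒮) {H : ℝ} (hf : ∀ t, |f t - Pexp p f| ≤ H) :
    varP p (fun t => (f t - Pexp p f) ^ 2) ≤ H ^ 2 * varP p f := by
  calc varP p (fun t => (f t - Pexp p f) ^ 2)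
      ≤ Pexp p (fun t => ((f t - Pexp p f) ^ 2 - 0) ^ 2) := varP_le_Pexp_sq_sub hp _ 0
    _ ≤ Pexp p (fun t => H ^ 2 * (f t - Pexp p f) ^ 2) := Pexp_mono hp fun t => by
      have := sq_le_sq' (neg_le_of_abs_le (hf t)) (le_of_abs_le (hf t))
      nlinarith [sq_nonneg (f t - Pexp p f)]
    _ = H ^ 2 * varP p f := by rw [Pexp_const_mul, ← varP_eq_Pexp_sq_sub hp]

lemma Pexp_mul_le_sqrt_varP_mul_sqrt_varP (hp : p ∈ stdSimplex ℝ 𝒮) (f g : 𝒮 → ℝ) :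
    Pexp p (fun t => (f t - Pexp p f) * (g t - Pexp p g)) ≤ √(varP p f) * √(varP p g) := by
  rw [← Real.sqrt_mul (varP_nonneg hp f), varP_eq_Pexp_sq_sub hp f, varP_eq_Pexp_sq_sub hp g]
  refine Real.le_sqrt_of_sq_le (Finset.sum_sq_le_sum_mul_sum_of_sq_le_mul _
    (fun t _ => mul_nonneg (hp.1 t) (sq_nonneg _)) (fun t _ => mul_nonneg (hp.1 t) (sq_nonneg _))
    fun t _ => le_of_eq (by ring))

/-- The standard deviation is convex, with the normalised centred variable as a subgradient. -/
lemma sqrt_varP_mul_sub_le (hp : p ∈ stdSimplex ℝ 𝒮) {H : ℝ} (hU : ∀ t, |U t - Pexp p U| ≤ H) :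
    √(varP p U) * (√(varP p U) - √(varP p V)) ≤ H * Pexp p (fun t => |U t - V t|) := by
  have centred : Pexp p (fun t => (Pexp p V - Pexp p U) * (U t - Pexp p U)) = 0 := by
    rw [Pexp_const_mul, Pexp_sub, Pexp_const hp, sub_self, mul_zero]
  calc √(varP p U) * (√(varP p U) - √(varP p V))
      = varP p U - √(varP p U) * √(varP p V) := by
        rw [mul_sub, Real.mul_self_sqrt (varP_nonneg hp U)]
    _ ≤ varP p U - Pexp p (fun t => (U t - Pexp p U) * (V t - Pexp p V)) :=
        sub_le_sub_left (Pexp_mul_le_sqrt_varP_mul_sqrt_varP hp U V) _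
    _ = Pexp p (fun t => (U t - Pexp p U) * (U t - V t)) := by
        rw [varP_eq_Pexp_sq_sub hp, ← Pexp_sub, ← add_zero (Pexp p fun t => _ * (U t - V t)),
          ← centred, ← Pexp_add]
        congr 1; ext t; ring
    _ ≤ Pexp p (fun t => H * |U t - V t|) := Pexp_mono hp fun t =>
        (le_abs_self _).trans ((abs_mul _ _).trans_le
          (mul_le_mul_of_nonneg_right (hU t) (abs_nonneg _)))
    _ = H * Pexp p (fun t => |U t - V t|) := Pexp_const_mul _ _ _

end Moments

/-! ### The penalty is Lipschitz -/

section Penalty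

variable {𝒮 : Type} [Fintype 𝒮] {p U V : 𝒮 → ℝ} {γ δ Cb : ℝ} {N n : ℕ}

/-- The coefficient of the empirical standard deviation in the penalty. -/
def penaltyScale (γ δ Cb : ℝ) (N n : ℕ) : ℝ :=
  √(Cb * Real.log ((N : ℝ) / ((1 - γ) * δ)) / (n : ℝ))

lemma penalty_eq_of_ne_zero (hCb : 0 ≤ Cb) (hlog : 0 ≤ Real.log ((N : ℝ) / ((1 - γ) * δ)))
    (hn : n ≠ 0) :
    penalty γ δ Cb N n p V =
      min (max (penaltyScale γ δ Cb N n * √(varP p V))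
        (2 * (1 / (1 - γ)) * penaltyScale γ δ Cb N n ^ 2)) (1 / (1 - γ)) + 4 / (N : ℝ) := by
  have hnonneg : 0 ≤ Cb * Real.log ((N : ℝ) / ((1 - γ) * δ)) / (n : ℝ) := by positivity
  rw [penalty, if_neg hn, penaltyScale, ← Real.sqrt_mul hnonneg, Real.sq_sqrt hnonneg,
    div_mul_eq_mul_div, mul_one_div, ← mul_div_mul_comm, ← mul_assoc 2]

/-- The floor `2 * H * c ^ 2` keeps the scaled standard deviation in the regime where its slope
`c * H / x` is at most `1 / 2`. -/
lemma mul_le_max_add_half {x y c H e : ℝ} (hc : 0 ≤ c) (hH : 0 ≤ H) (he : 0 ≤ e)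
    (hxy : x * (x - y) ≤ H * e) : c * x ≤ max (c * y) (2 * H * c ^ 2) + 1 / 2 * e := by
  rcases le_or_gt (c * x) (2 * H * c ^ 2) with hsmall | hlarge
  · linarith [le_max_right (c * y) (2 * H * c ^ 2)]
  suffices c * (x - y) ≤ 1 / 2 * e by linarith [le_max_left (c * y) (2 * H * c ^ 2)]
  have hx : 2 * H * c < x := lt_of_mul_lt_mul_left (by linarith) hc
  have hx_pos : 0 < x := (by positivity : 0 ≤ 2 * H * c).trans_lt hx
  refine le_of_mul_le_mul_left ?_ hx_pos
  calc x * (c * (x - y)) = c * (x * (x - y)) := by ring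
    _ ≤ c * (H * e) := mul_le_mul_of_nonneg_left hxy hc
    _ = 2 * H * c * (1 / 2 * e) := by ring
    _ ≤ x * (1 / 2 * e) := mul_le_mul_of_nonneg_right hx.le (by positivity)

lemma penalty_sub_le (hp : p ∈ stdSimplex ℝ 𝒮) (hγ : γ < 1) (hCb : 0 ≤ Cb)
    (hlog : 0 ≤ Real.log ((N : ℝ) / ((1 - γ) * δ)))
    (hU : ∀ t, |U t - Pexp p U| ≤ 1 / (1 - γ)) :
    penalty γ δ Cb N n p U - penalty γ δ Cb N n p V ≤ 1 / 2 * Pexp p (fun t => |U t - V t|) := by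
  have hE : 0 ≤ Pexp p (fun t => |U t - V t|) := Pexp_nonneg hp fun t => abs_nonneg _
  rcases eq_or_ne n 0 with rfl | hn
  · simpa [penalty] using hE
  rw [penalty_eq_of_ne_zero hCb hlog hn, penalty_eq_of_ne_zero hCb hlog hn,
    add_sub_add_right_eq_sub, sub_le_iff_le_add']
  have hmul := mul_le_max_add_half (Real.sqrt_nonneg _ : 0 ≤ penaltyScale γ δ Cb N n)
    (one_div_nonneg.2 (sub_nonneg.2 hγ.le)) hE (sqrt_varP_mul_sub_le (V := V) hp hU)
  rw [← min_add_add_right]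
  refine min_le_min (max_le hmul ?_) ?_
  · linarith [le_max_right (penaltyScale γ δ Cb N n * √(varP p V))
      (2 * (1 / (1 - γ)) * penaltyScale γ δ Cb N n ^ 2)]
  · linarith

lemma penalty_add_const (hp : p ∈ stdSimplex ℝ 𝒮) (V : 𝒮 → ℝ) (c : ℝ) :
    penalty γ δ Cb N n p (fun t => V t + c) = penalty γ δ Cb N n p V := by
  simp only [penalty, varP_add_const hp]

/-- Shifting `V` above `U` leaves the penalty unchanged and turns `Pexp p |U - V|` into a difference
of expectations, so that the penalty uses up only the slack in the expected values. -/
lemma mul_abs_Pexp_sub_add_abs_penalty_sub_le (hp : p ∈ stdSimplex ℝ 𝒮) (hγ2 : 1 / 2 ≤ γ)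
    (hγ : γ < 1) (hCb : 0 ≤ Cb) (hlog : 0 ≤ Real.log ((N : ℝ) / ((1 - γ) * δ)))
    (hU : ∀ t, |U t - Pexp p U| ≤ 1 / (1 - γ)) (hV : ∀ t, |V t - Pexp p V| ≤ 1 / (1 - γ)) :
    γ * |Pexp p U - Pexp p V| + |penalty γ δ Cb N n p U - penalty γ δ Cb N n p V| ≤
      γ * dist U V := by
  wlog hUV : Pexp p V ≤ Pexp p U generalizing U V
  · rw [abs_sub_comm (Pexp p U), abs_sub_comm (penalty γ δ Cb N n p U), dist_comm]
    exact this hV hU (le_of_not_ge hUV)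
  set W : 𝒮 → ℝ := fun t => V t + dist U V
  have hW (t : 𝒮) : |W t - Pexp p W| ≤ 1 / (1 - γ) := by
    simpa only [W, Pexp_add, Pexp_const hp, add_sub_add_right_eq_sub] using hV t
  have hUW (t : 𝒮) : U t ≤ W t := by
    linarith [le_of_abs_le (dist_le_pi_dist U V t)]
  have hpenW : penalty γ δ Cb N n p W = penalty γ δ Cb N n p V := penalty_add_const hp V _
  have hEW : Pexp p (fun t => |W t - U t|) = Pexp p V + dist U V - Pexp p U := by
    simp only [abs_of_nonneg (sub_nonneg.2 (hUW _)), Pexp_sub, W, Pexp_add, Pexp_const hp]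
  have hUW_pen := penalty_sub_le (V := W) (n := n) hp hγ hCb hlog hU
  have hWU_pen := penalty_sub_le (V := U) (n := n) hp hγ hCb hlog hW
  simp only [abs_sub_comm (U _)] at hUW_pen
  rw [hEW, hpenW] at hUW_pen hWU_pen
  have hslack : 0 ≤ (γ - 1 / 2) * (dist U V - (Pexp p U - Pexp p V)) :=
    mul_nonneg (sub_nonneg.2 hγ2)
      (sub_nonneg.2 ((le_abs_self _).trans (abs_Pexp_sub_le_dist hp U V)))
  have hpen := abs_le.2 ⟨by linarith, hUW_pen⟩
  rw [abs_of_nonneg (sub_nonneg.2 hUV)]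
  linarith

end Penalty

/-! ### The minimax value is nonexpansive and the pessimistic operators are contractions -/

section Minimax

variable {ι κ : Type*} [Nonempty ι] [Nonempty κ] {f g : ι → κ → ℝ} {l u ε : ℝ}

lemma ciInf_mem_Icc {f : κ → ℝ} (hf : ∀ j, f j ∈ Set.Icc l u) : ⨅ j, f j ∈ Set.Icc l u :=
  ⟨le_ciInf fun j => (hf j).1,
    ciInf_le_of_le ⟨l, Set.forall_mem_range.2 fun j => (hf j).1⟩ (Classical.arbitrary κ) (hf _).2⟩

lemma ciSup_ciInf_mem_Icc (hf : ∀ i j, f i j ∈ Set.Icc l u) : ⨆ i, ⨅ j, f i j ∈ Set.Icc l u :=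
  have hinf (i : ι) := ciInf_mem_Icc (hf i)
  ⟨le_ciSup_of_le ⟨u, Set.forall_mem_range.2 fun i => (hinf i).2⟩ (Classical.arbitrary ι)
    (hinf _).1, ciSup_le fun i => (hinf i).2⟩

lemma ciSup_ciInf_le_add (hf : ∀ i, BddBelow (Set.range (f i))) (hg : ∀ i j, g i j ∈ Set.Icc l u)
    (h : ∀ i j, f i j ≤ g i j + ε) : ⨆ i, ⨅ j, f i j ≤ (⨆ i, ⨅ j, g i j) + ε := by
  refine ciSup_le fun i => ?_
  calc ⨅ j, f i j ≤ ⨅ j, (g i j + ε) := ciInf_mono (hf i) (h i)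
    _ = (⨅ j, g i j) + ε :=
      (ciInf_add ⟨l, Set.forall_mem_range.2 fun j => (hg i j).1⟩ ε).symm
    _ ≤ (⨆ i, ⨅ j, g i j) + ε := by
      gcongr
      exact le_ciSup (f := fun i => ⨅ j, g i j)
        ⟨u, Set.forall_mem_range.2 fun i => (ciInf_mem_Icc (hg i)).2⟩ i

end Minimax

section PayoffBounds

variable {𝒮 𝒜 ℬ : Type} [Fintype 𝒜] [Fintype ℬ]

lemma pay_eq_Pexp_Pexp (M : 𝒜 → ℬ → ℝ) (w : 𝒜 → ℝ) (z : ℬ → ℝ) :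
    pay M w z = Pexp w fun a => Pexp z (M a) := by
  simp only [pay, Pexp, Finset.mul_sum, mul_assoc]

lemma pay_mem_Icc {M : 𝒜 → ℬ → ℝ} {w : 𝒜 → ℝ} {z : ℬ → ℝ} {l u : ℝ} (hw : w ∈ stdSimplex ℝ 𝒜)
    (hz : z ∈ stdSimplex ℝ ℬ) (h : ∀ a b, M a b ∈ Set.Icc l u) : pay M w z ∈ Set.Icc l u := by
  rw [pay_eq_Pexp_Pexp]
  exact Pexp_mem_Icc hw fun a => Pexp_mem_Icc hz (h a)

lemma abs_pay_sub_le_dist {w : 𝒜 → ℝ} {z : ℬ → ℝ} (hw : w ∈ stdSimplex ℝ 𝒜)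
    (hz : z ∈ stdSimplex ℝ ℬ) (M M' : 𝒜 → ℬ → ℝ) : |pay M w z - pay M' w z| ≤ dist M M' := by
  simp only [pay_eq_Pexp_Pexp]
  exact (abs_Pexp_sub_le_dist hw _ _).trans ((dist_pi_le_iff dist_nonneg).2 fun a =>
    (abs_Pexp_sub_le_dist hz _ _).trans (dist_le_pi_dist M M' a))

variable [Nonempty 𝒜] [Nonempty ℬ]

lemma valQ_mem_Icc {Q : 𝒮 → 𝒜 → ℬ → ℝ} {l u : ℝ} (h : ∀ s a b, Q s a b ∈ Set.Icc l u) (s : 𝒮) :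
    valQ Q s ∈ Set.Icc l u :=
  ciSup_ciInf_mem_Icc fun w z => pay_mem_Icc w.2 z.2 (h s)

variable [Fintype 𝒮]

lemma valQ_le_add_dist (Q Q' : 𝒮 → 𝒜 → ℬ → ℝ) (s : 𝒮) : valQ Q s ≤ valQ Q' s + dist Q Q' := by
  have hbound (R : 𝒮 → 𝒜 → ℬ → ℝ) (a : 𝒜) (b : ℬ) : R s a b ∈ Set.Icc (-dist R 0) (dist R 0) :=
    abs_le.1 <| (by simpa using dist_le_pi_dist (R s a) 0 b : |R s a b| ≤ dist (R s a) 0).trans <|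
      (dist_le_pi_dist (R s) 0 a).trans (dist_le_pi_dist R 0 s)
  refine ciSup_ciInf_le_add
    (fun w => ⟨-dist Q 0, Set.forall_mem_range.2 fun z => (pay_mem_Icc w.2 z.2 (hbound Q)).1⟩)
    (fun w z => pay_mem_Icc w.2 z.2 (hbound Q')) fun w z => ?_
  have hpay := (abs_pay_sub_le_dist w.2 z.2 (Q s) (Q' s)).trans (dist_le_pi_dist Q Q' s)
  linarith [le_of_abs_le hpay]

lemma dist_valQ_le (Q Q' : 𝒮 → 𝒜 → ℬ → ℝ) : dist (valQ Q) (valQ Q') ≤ dist Q Q' :=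
  (dist_pi_le_iff dist_nonneg).2 fun s => abs_sub_le_iff.2
    ⟨sub_le_iff_le_add'.2 (valQ_le_add_dist Q Q' s),
      sub_le_iff_le_add'.2 (dist_comm Q Q' ▸ valQ_le_add_dist Q' Q s)⟩

end PayoffBounds

section Contraction

variable {𝒮 𝒜 ℬ : Type} [Fintype 𝒮] [Fintype 𝒜] [Fintype ℬ]

lemma dist_le_iff_forall_abs_sub_le {Q Q' : 𝒮 → 𝒜 → ℬ → ℝ} {ε : ℝ} (hε : 0 ≤ ε) :
    dist Q Q' ≤ ε ↔ ∀ s a b, |Q s a b - Q' s a b| ≤ ε := by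
  simp only [dist_pi_le_iff hε, Real.dist_eq]

lemma abs_add_mul_add_sub_le {γ : ℝ} (hγ : 0 ≤ γ) (ρ x y u v : ℝ) :
    |ρ + γ * x + u - (ρ + γ * y + v)| ≤ γ * |x - y| + |u - v| := by
  calc |ρ + γ * x + u - (ρ + γ * y + v)| = |γ * (x - y) + (u - v)| := by congr 1; ring
    _ ≤ |γ * (x - y)| + |u - v| := abs_add_le _ _
    _ = γ * |x - y| + |u - v| := by rw [abs_mul, abs_of_nonneg hγ]

/-- The `Q`-functions with values in `[0, H]`. -/
def qBox (𝒮 𝒜 ℬ : Type) (H : ℝ) : Set (𝒮 → 𝒜 → ℬ → ℝ) := {Q | ∀ s a b, Q s a b ∈ Set.Icc 0 H}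

variable [Nonempty 𝒜] [Nonempty ℬ] {γ δ Cb : ℝ} {N : ℕ} {Ph : 𝒮 → 𝒜 → ℬ → 𝒮 → ℝ}
  {Q Q' : 𝒮 → 𝒜 → ℬ → ℝ}

lemma mul_abs_Pexp_valQ_sub_add_abs_penalty_valQ_sub_le {p : 𝒮 → ℝ} (hp : p ∈ stdSimplex ℝ 𝒮)
    (hγ2 : 1 / 2 ≤ γ) (hγ : γ < 1) (hCb : 0 ≤ Cb) (hlog : 0 ≤ Real.log ((N : ℝ) / ((1 - γ) * δ)))
    (hQ : Q ∈ qBox 𝒮 𝒜 ℬ (1 / (1 - γ))) (hQ' : Q' ∈ qBox 𝒮 𝒜 ℬ (1 / (1 - γ))) (n : ℕ) :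
    γ * |Pexp p (valQ Q) - Pexp p (valQ Q')| +
      |penalty γ δ Cb N n p (valQ Q) - penalty γ δ Cb N n p (valQ Q')| ≤ γ * dist Q Q' :=
  (mul_abs_Pexp_sub_add_abs_penalty_sub_le hp hγ2 hγ hCb hlog
    (abs_sub_Pexp_le hp (valQ_mem_Icc hQ)) (abs_sub_Pexp_le hp (valQ_mem_Icc hQ'))).trans
    (mul_le_mul_of_nonneg_left (dist_valQ_le Q Q') (by linarith))

theorem dist_TpeMinus_le (hPh : IsKernel Ph) (hγ2 : 1 / 2 ≤ γ) (hγ : γ < 1) (hCb : 0 ≤ Cb)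
    (hlog : 0 ≤ Real.log ((N : ℝ) / ((1 - γ) * δ))) (n : 𝒮 → 𝒜 → ℬ → ℕ) (rh : 𝒮 → 𝒜 → ℬ → ℝ)
    (hQ : Q ∈ qBox 𝒮 𝒜 ℬ (1 / (1 - γ))) (hQ' : Q' ∈ qBox 𝒮 𝒜 ℬ (1 / (1 - γ))) :
    dist (TpeMinus γ δ Cb N n Ph rh Q) (TpeMinus γ δ Cb N n Ph rh Q') ≤ γ * dist Q Q' := by
  refine (dist_le_iff_forall_abs_sub_le (by positivity)).2 fun s a b => ?_
  refine (abs_max_sub_max_le_abs _ _ _).trans (le_trans ?_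
    (mul_abs_Pexp_valQ_sub_add_abs_penalty_valQ_sub_le (hPh s a b) hγ2 hγ hCb hlog hQ hQ'
      (n s a b)))
  rw [sub_eq_add_neg _ (penalty _ _ _ _ _ _ _), sub_eq_add_neg _ (penalty _ _ _ _ _ _ (valQ Q'))]
  refine (abs_add_mul_add_sub_le (by linarith) _ _ _ _ _).trans_eq ?_
  rw [neg_sub_neg, abs_sub_comm (penalty _ _ _ _ _ _ _)]

theorem dist_TpePlus_le (hPh : IsKernel Ph) (hγ2 : 1 / 2 ≤ γ) (hγ : γ < 1) (hCb : 0 ≤ Cb)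
    (hlog : 0 ≤ Real.log ((N : ℝ) / ((1 - γ) * δ))) (n : 𝒮 → 𝒜 → ℬ → ℕ) (rh : 𝒮 → 𝒜 → ℬ → ℝ)
    (hQ : Q ∈ qBox 𝒮 𝒜 ℬ (1 / (1 - γ))) (hQ' : Q' ∈ qBox 𝒮 𝒜 ℬ (1 / (1 - γ))) :
    dist (TpePlus γ δ Cb N n Ph rh Q) (TpePlus γ δ Cb N n Ph rh Q') ≤ γ * dist Q Q' := by
  refine (dist_le_iff_forall_abs_sub_le (by positivity)).2 fun s a b => ?_
  exact (abs_inf_sub_inf_le_abs _ _ _).trans ((abs_add_mul_add_sub_le (by linarith) _ _ _ _ _).trans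
    (mul_abs_Pexp_valQ_sub_add_abs_penalty_valQ_sub_le (hPh s a b) hγ2 hγ hCb hlog hQ hQ' _))

end Contraction

/-! ### A grid for the fixed points off one triple -/

section Grid

variable {𝒮 𝒜 ℬ : Type} {T : (𝒮 → 𝒜 → ℬ → ℝ) → 𝒮 → 𝒜 → ℬ → ℝ} {s : 𝒮} {a : 𝒜} {b : ℬ}
  {Q Q' : 𝒮 → 𝒜 → ℬ → ℝ} {γ H ε : ℝ}

/-- `Q` solves the fixed-point equation of `T` everywhere except possibly at `(s, a, b)`. This is
the part of the equation that does not involve the next states observed at `(s, a, b)`. -/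
def IsFixedOff (T : (𝒮 → 𝒜 → ℬ → ℝ) → 𝒮 → 𝒜 → ℬ → ℝ) (s : 𝒮) (a : 𝒜) (b : ℬ)
    (Q : 𝒮 → 𝒜 → ℬ → ℝ) : Prop :=
  ∀ s' a' b', ¬(s' = s ∧ a' = a ∧ b' = b) → T Q s' a' b' = Q s' a' b'

lemma abs_sub_le_of_natFloor_div_eq {x y : ℝ} (hε : 0 < ε) (hx : 0 ≤ x) (hy : 0 ≤ y)
    (h : ⌊x / ε⌋₊ = ⌊y / ε⌋₊) : |x - y| ≤ ε := by
  have hfloor : ⌊x / ε⌋ = ⌊y / ε⌋ := by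
    rw [← Int.natCast_floor_eq_floor (by positivity), ← Int.natCast_floor_eq_floor (by positivity),
      h]
  have hlt := Int.abs_sub_lt_one_of_floor_eq_floor hfloor
  rw [← sub_div, abs_div, abs_of_pos hε, div_lt_one hε] at hlt
  exact hlt.le

variable [Fintype 𝒮] [Fintype 𝒜] [Fintype ℬ]

lemma dist_le_abs_sub_of_isFixedOff (hγ0 : 0 ≤ γ) (hγ : γ < 1)
    (hT : dist (T Q) (T Q') ≤ γ * dist Q Q') (hQ : IsFixedOff T s a b Q)
    (hQ' : IsFixedOff T s a b Q') :
    dist Q Q' ≤ |Q s a b - Q' s a b| := by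
  have hTpoint := (dist_le_iff_forall_abs_sub_le (by positivity)).1 hT
  have hmax : dist Q Q' ≤ max |Q s a b - Q' s a b| (γ * dist Q Q') := by
    refine (dist_le_iff_forall_abs_sub_le (by positivity)).2 fun s' a' b' => ?_
    by_cases h : s' = s ∧ a' = a ∧ b' = b
    · obtain ⟨rfl, rfl, rfl⟩ := h
      exact le_max_left _ _
    · rw [← hQ s' a' b' h, ← hQ' s' a' b' h]
      exact le_max_of_le_right (hTpoint s' a' b')
  refine (le_max_iff.1 hmax).elim id fun h => ?_
  nlinarith [dist_nonneg (x := Q) (y := Q'), abs_nonneg (Q s a b - Q' s a b)]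

/-- The grid is indexed by the rounded value at `(s, a, b)`, which determines a fixed point off
`(s, a, b)` up to `ε`. -/
theorem exists_grid_of_contraction (hγ0 : 0 ≤ γ) (hγ : γ < 1) (hH : 0 ≤ H) (hε : 0 < ε)
    (hT : ∀ Q ∈ qBox 𝒮 𝒜 ℬ H, ∀ Q' ∈ qBox 𝒮 𝒜 ℬ H, dist (T Q) (T Q') ≤ γ * dist Q Q')
    (s : 𝒮) (a : 𝒜) (b : ℬ) :
    ∃ F : Fin (⌊H / ε⌋₊ + 1) → 𝒮 → 𝒜 → ℬ → ℝ, (∀ k, F k ∈ qBox 𝒮 𝒜 ℬ H) ∧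
      ∀ Q ∈ qBox 𝒮 𝒜 ℬ H, IsFixedOff T s a b Q → ∃ k, dist Q (F k) ≤ ε := by
  have hcell (k : ℕ) : ∃ G ∈ qBox 𝒮 𝒜 ℬ H, ∀ Q ∈ qBox 𝒮 𝒜 ℬ H, IsFixedOff T s a b Q →
      ⌊Q s a b / ε⌋₊ = k → dist Q G ≤ ε := by
    by_cases hex : ∃ G ∈ qBox 𝒮 𝒜 ℬ H, IsFixedOff T s a b G ∧ ⌊G s a b / ε⌋₊ = k
    · obtain ⟨G, hG, hGfix, rfl⟩ := hex
      exact ⟨G, hG, fun Q hQ hQfix hk =>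
        (dist_le_abs_sub_of_isFixedOff hγ0 hγ (hT Q hQ G hG) hQfix hGfix).trans
          (abs_sub_le_of_natFloor_div_eq hε (hQ s a b).1 (hG s a b).1 hk)⟩
    · exact ⟨0, fun _ _ _ => ⟨le_rfl, hH⟩, fun Q hQ hQfix hk => (hex ⟨Q, hQ, hQfix, hk⟩).elim⟩
  choose G hG hGcover using hcell
  refine ⟨fun k => G k, fun k => hG k, fun Q hQ hQfix => ⟨⟨⌊Q s a b / ε⌋₊, ?_⟩, ?_⟩⟩
  · exact Nat.lt_succ_of_le (Nat.floor_le_floor (div_le_div_of_nonneg_right (hQ s a b).2 hε.le))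
  · exact hGcover _ Q hQ hQfix rfl

end Grid

/-! ### Erasing the next states observed at one triple -/

section Erasing

variable {𝒮 𝒜 ℬ : Type} {N : ℕ}

/-- The transition `x` leaves from `(s, a, b)`. -/
abbrev StartsAt (s : 𝒮) (a : 𝒜) (b : ℬ) (x : 𝒮 × 𝒜 × ℬ × 𝒮) : Prop :=
  x.1 = s ∧ x.2.1 = a ∧ x.2.2.1 = b

variable [DecidableEq 𝒮] [DecidableEq 𝒜] [DecidableEq ℬ]

/-- Forget the next state of a transition that leaves from `(s, a, b)`, encoded by overwriting it
with `s`. Composing a dataset with `eraseNext s a b` is the leave-one-out operation. -/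
def eraseNext (s : 𝒮) (a : 𝒜) (b : ℬ) (x : 𝒮 × 𝒜 × ℬ × 𝒮) : 𝒮 × 𝒜 × ℬ × 𝒮 :=
  if StartsAt s a b x then (s, a, b, s) else x

lemma startsAt_eraseNext (s : 𝒮) (a : 𝒜) (b : ℬ) (x : 𝒮 × 𝒜 × ℬ × 𝒮) (s' : 𝒮) (a' : 𝒜) (b' : ℬ) :
    StartsAt s' a' b' (eraseNext s a b x) ↔ StartsAt s' a' b' x := by
  unfold eraseNext
  split_ifs with h
  · obtain ⟨rfl, rfl, rfl⟩ := h
    rfl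
  · rfl

lemma eraseNext_eq_iff_of_not_startsAt {s : 𝒮} {a : 𝒜} {b : ℬ} {y : 𝒮 × 𝒜 × ℬ × 𝒮}
    (h : ¬StartsAt s a b y) (x : 𝒮 × 𝒜 × ℬ × 𝒮) : eraseNext s a b x = y ↔ x = y := by
  unfold eraseNext
  split_ifs with hx
  · exact iff_of_false (by rintro rfl; exact h ⟨rfl, rfl, rfl⟩) (by rintro rfl; exact h hx)
  · rfl

lemma cnt_eraseNext (D : Fin N → 𝒮 × 𝒜 × ℬ × 𝒮) (s : 𝒮) (a : 𝒜) (b : ℬ) :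
    cnt (eraseNext s a b ∘ D) = cnt D := by
  funext s' a' b'
  exact congrArg Finset.card
    (Finset.filter_congr fun i _ => startsAt_eraseNext s a b (D i) s' a' b')

lemma cntT_eraseNext (D : Fin N → 𝒮 × 𝒜 × ℬ × 𝒮) {s s' : 𝒮} {a a' : 𝒜} {b b' : ℬ}
    (h : ¬(s' = s ∧ a' = a ∧ b' = b)) (t : 𝒮) :
    cntT (eraseNext s a b ∘ D) s' a' b' t = cntT D s' a' b' t :=
  congrArg Finset.card (Finset.filter_congr fun i _ => eraseNext_eq_iff_of_not_startsAt h (D i))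

lemma cnt_le (D : Fin N → 𝒮 × 𝒜 × ℬ × 𝒮) (s : 𝒮) (a : 𝒜) (b : ℬ) : cnt D s a b ≤ N :=
  (Finset.card_filter_le _ _).trans_eq (by simp)

variable [Fintype 𝒮]

lemma Phat_eraseNext (D : Fin N → 𝒮 × 𝒜 × ℬ × 𝒮) {s s' : 𝒮} {a a' : 𝒜} {b b' : ℬ}
    (h : ¬(s' = s ∧ a' = a ∧ b' = b)) :
    Phat (eraseNext s a b ∘ D) s' a' b' = Phat D s' a' b' := by
  funext t
  simp only [Phat, cnt_eraseNext, cntT_eraseNext D h]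

lemma sum_cntT_mul (D : Fin N → 𝒮 × 𝒜 × ℬ × 𝒮) (s : 𝒮) (a : 𝒜) (b : ℬ) (g : 𝒮 → ℝ) :
    ∑ t, (cntT D s a b t : ℝ) * g t =
      ∑ i, if StartsAt s a b (D i) then g (D i).2.2.2 else 0 := by
  simp only [cntT, Finset.card_filter, Nat.cast_sum, Finset.sum_mul]
  rw [Finset.sum_comm]
  refine Finset.sum_congr rfl fun i _ => ?_
  simp [StartsAt, Prod.ext_iff, ite_and, Finset.sum_ite_eq, ite_mul]

lemma cnt_mul_Pexp_Phat {D : Fin N → 𝒮 × 𝒜 × ℬ × 𝒮} {s : 𝒮} {a : 𝒜} {b : ℬ}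
    (h : cnt D s a b ≠ 0) (g : 𝒮 → ℝ) :
    (cnt D s a b : ℝ) * Pexp (Phat D s a b) g =
      ∑ i, if StartsAt s a b (D i) then g (D i).2.2.2 else 0 := by
  rw [← sum_cntT_mul, Pexp, Finset.mul_sum]
  refine Finset.sum_congr rfl fun t _ => ?_
  rw [Phat, if_neg h]
  field_simp

lemma Phat_isKernel (D : Fin N → 𝒮 × 𝒜 × ℬ × 𝒮) : IsKernel (Phat D) := by
  intro s a b
  have : Nonempty 𝒮 := ⟨s⟩
  by_cases h : cnt D s a b = 0
  · exact ⟨fun t => by simp [Phat, h], by simp [Phat, h]⟩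
  · refine ⟨fun t => by simp only [Phat, h, if_false]; positivity, ?_⟩
    have htotal := cnt_mul_Pexp_Phat h fun _ => 1
    rw [← Finset.natCast_card_filter] at htotal
    simpa [Pexp] using (mul_eq_left₀ (Nat.cast_ne_zero.2 h)).1 htotal

end Erasing

section LeaveOneOut

variable {𝒮 𝒜 ℬ : Type} [Fintype 𝒮] [Fintype 𝒜] [Fintype ℬ]
  [DecidableEq 𝒮] [DecidableEq 𝒜] [DecidableEq ℬ] {N : ℕ}

/-- The properties of a data-driven Bellman operator `D ↦ T D` that the leave-one-out argument at
`(s, a, b)` relies on: off `(s, a, b)` it ignores the next states observed at `(s, a, b)`, and it is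
a `γ`-contraction of the `Q`-functions with values in `[0, H]`. -/
structure IsLeaveOneOutContraction
    (T : (Fin N → 𝒮 × 𝒜 × ℬ × 𝒮) → (𝒮 → 𝒜 → ℬ → ℝ) → 𝒮 → 𝒜 → ℬ → ℝ) (γ H : ℝ)
    (s : 𝒮) (a : 𝒜) (b : ℬ) : Prop where
  apply_eraseNext : ∀ D Q s' a' b', ¬(s' = s ∧ a' = a ∧ b' = b) →
    T (eraseNext s a b ∘ D) Q s' a' b' = T D Q s' a' b'
  dist_le : ∀ D, ∀ Q ∈ qBox 𝒮 𝒜 ℬ H, ∀ Q' ∈ qBox 𝒮 𝒜 ℬ H, dist (T D Q) (T D Q') ≤ γ * dist Q Q'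

lemma IsLeaveOneOutContraction.isFixedOff
    {T : (Fin N → 𝒮 × 𝒜 × ℬ × 𝒮) → (𝒮 → 𝒜 → ℬ → ℝ) → 𝒮 → 𝒜 → ℬ → ℝ} {γ H : ℝ}
    {s : 𝒮} {a : 𝒜} {b : ℬ} (hT : IsLeaveOneOutContraction T γ H s a b)
    {D : Fin N → 𝒮 × 𝒜 × ℬ × 𝒮} {Q : 𝒮 → 𝒜 → ℬ → ℝ} (hQ : T D Q = Q) :
    IsFixedOff (T (eraseNext s a b ∘ D)) s a b Q := fun s' a' b' h => by
  rw [hT.apply_eraseNext D Q s' a' b' h, hQ]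

variable {γ δ Cb : ℝ}

theorem isLeaveOneOutContraction_TpeMinus (hγ2 : 1 / 2 ≤ γ) (hγ : γ < 1) (hCb : 0 ≤ Cb)
    (hlog : 0 ≤ Real.log ((N : ℝ) / ((1 - γ) * δ))) (r : 𝒮 → 𝒜 → ℬ → ℝ)
    (s : 𝒮) (a : 𝒜) (b : ℬ) :
    IsLeaveOneOutContraction
      (fun D : Fin N → 𝒮 × 𝒜 × ℬ × 𝒮 => TpeMinus γ δ Cb N (cnt D) (Phat D) (rhat r D))
      γ (1 / (1 - γ)) s a b where
  apply_eraseNext D Q s' a' b' h := by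
    simp only [TpeMinus, rhat, cnt_eraseNext, Phat_eraseNext D h]
  dist_le D _ hQ _ hQ' :=
    have : Nonempty 𝒜 := ⟨a⟩
    have : Nonempty ℬ := ⟨b⟩
    dist_TpeMinus_le (Phat_isKernel D) hγ2 hγ hCb hlog _ _ hQ hQ'

theorem isLeaveOneOutContraction_TpePlus (hγ2 : 1 / 2 ≤ γ) (hγ : γ < 1) (hCb : 0 ≤ Cb)
    (hlog : 0 ≤ Real.log ((N : ℝ) / ((1 - γ) * δ))) (r : 𝒮 → 𝒜 → ℬ → ℝ)
    (s : 𝒮) (a : 𝒜) (b : ℬ) :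
    IsLeaveOneOutContraction
      (fun D : Fin N → 𝒮 × 𝒜 × ℬ × 𝒮 => TpePlus γ δ Cb N (cnt D) (Phat D) (rhat r D))
      γ (1 / (1 - γ)) s a b where
  apply_eraseNext D Q s' a' b' h := by
    simp only [TpePlus, rhat, cnt_eraseNext, Phat_eraseNext D h]
  dist_le D _ hQ _ hQ' :=
    have : Nonempty 𝒜 := ⟨a⟩
    have : Nonempty ℬ := ⟨b⟩
    dist_TpePlus_le (Phat_isKernel D) hγ2 hγ hCb hlog _ _ hQ hQ'

end LeaveOneOut

/-! ### Probabilities of events of an i.i.d. sample -/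

section IID

variable {𝒳 : Type} {N : ℕ} {w : 𝒳 → ℝ}

lemma iidWeight_nonneg (hw : ∀ x, 0 ≤ w x) (ω : Fin N → 𝒳) : 0 ≤ iidWeight w ω :=
  Finset.prod_nonneg fun i _ => hw (ω i)

variable [Fintype 𝒳]

lemma iidProb_mono (hw : ∀ x, 0 ≤ w x) {E F : Set (Fin N → 𝒳)} (h : E ⊆ F) :
    iidProb w E ≤ iidProb w F :=
  Finset.sum_le_sum fun ω _ => Set.indicator_le_indicator_of_subset h (iidWeight_nonneg hw) ω

lemma iidProb_iUnion_le (hw : ∀ x, 0 ≤ w x) {ι : Type*} [Fintype ι] (E : ι → Set (Fin N → 𝒳)) :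
    iidProb w (⋃ k, E k) ≤ ∑ k, iidProb w (E k) := by
  simp only [iidProb]
  rw [Finset.sum_comm]
  refine Finset.sum_le_sum fun ω _ => Set.indicator_apply_le' (fun hω => ?_) fun _ =>
    Finset.sum_nonneg fun k _ => Set.indicator_nonneg (fun ω _ => iidWeight_nonneg hw ω) ω
  obtain ⟨k, hk⟩ := Set.mem_iUnion.1 hω
  calc iidWeight w ω = (E k).indicator (iidWeight w) ω := (Set.indicator_of_mem hk _).symm
    _ ≤ ∑ k, (E k).indicator (iidWeight w) ω := Finset.single_le_sum
      (fun k _ => Set.indicator_nonneg (fun ω _ => iidWeight_nonneg hw ω) ω) (Finset.mem_univ k)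

lemma iidProb_union_le (hw : ∀ x, 0 ≤ w x) (E F : Set (Fin N → 𝒳)) :
    iidProb w (E ∪ F) ≤ iidProb w E + iidProb w F := by
  rw [Set.union_eq_iUnion]
  exact (iidProb_iUnion_le hw _).trans_eq (Fintype.sum_bool _)

lemma iidProb_compl (hw : w ∈ stdSimplex ℝ 𝒳) (E : Set (Fin N → 𝒳)) :
    iidProb w Eᶜ = 1 - iidProb w E := by
  have htotal : ∑ ω : Fin N → 𝒳, iidWeight w ω = 1 := by
    simp only [iidWeight, ← Fintype.piFinset_univ, ← Finset.prod_univ_sum, hw.2,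
      Finset.prod_const_one]
  rw [eq_sub_iff_add_eq, iidProb, iidProb, ← Finset.sum_add_distrib, ← htotal]
  exact Finset.sum_congr rfl fun ω _ => Set.indicator_compl_add_self_apply E _ ω

variable {𝒴 : Type*} [Finite 𝒴] [DecidableEq 𝒴] {φ : 𝒳 → 𝒴}

/-- Conditioning on `φ ∘ ω` keeps the draws independent, so the parameter `φ ∘ ω` of the factors
can be treated as a constant. -/
lemma sum_prod_le_one_of_fiber (hw : w ∈ stdSimplex ℝ 𝒳) {g : (Fin N → 𝒴) → 𝒳 → ℝ}
    (hg0 : ∀ E x, 0 ≤ g E x)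
    (hg : ∀ E y, ∑ x with φ x = y, w x * g E x ≤ ∑ x with φ x = y, w x) :
    ∑ ω : Fin N → 𝒳, ∏ i, w (ω i) * g (φ ∘ ω) (ω i) ≤ 1 := by
  cases nonempty_fintype 𝒴
  have hfiber (E : Fin N → 𝒴) : (Finset.univ.filter fun ω : Fin N → 𝒳 => φ ∘ ω = E) =
      Fintype.piFinset fun i => Finset.univ.filter fun x => φ x = E i := by
    ext ω
    simp [funext_iff]
  calc ∑ ω : Fin N → 𝒳, ∏ i, w (ω i) * g (φ ∘ ω) (ω i)
      = ∑ E : Fin N → 𝒴, ∑ ω with φ ∘ ω = E, ∏ i, w (ω i) * g (φ ∘ ω) (ω i) :=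
        (Finset.sum_fiberwise _ _ _).symm
    _ = ∑ E : Fin N → 𝒴, ∏ i, ∑ x with φ x = E i, w x * g E x := by
        refine Finset.sum_congr rfl fun E _ => ?_
        rw [Finset.prod_univ_sum, ← hfiber]
        exact Finset.sum_congr rfl fun ω hω => by rw [(Finset.mem_filter.1 hω).2]
    _ ≤ ∑ E : Fin N → 𝒴, ∏ i, ∑ x with φ x = E i, w x :=
        Finset.sum_le_sum fun E _ => Finset.prod_le_prod
          (fun i _ => Finset.sum_nonneg fun x _ => mul_nonneg (hw.1 x) (hg0 E x))
          fun i _ => hg E (E i)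
    _ = 1 := by
        rw [← Fintype.piFinset_univ,
          ← Finset.prod_univ_sum (fun _ => Finset.univ) fun _ y => ∑ x with φ x = y, w x]
        simp only [Finset.sum_fiberwise, hw.2, Finset.prod_const_one]

theorem iidProb_chernoff_of_fiber (hw : w ∈ stdSimplex ℝ 𝒳) {X : (Fin N → 𝒴) → 𝒳 → ℝ}
    (hX : ∀ E y, ∑ x with φ x = y, w x * Real.exp (X E x) ≤ ∑ x with φ x = y, w x) (L : ℝ) :
    iidProb w {ω : Fin N → 𝒳 | L ≤ ∑ i, X (φ ∘ ω) (ω i)} ≤ Real.exp (-L) := by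
  have hmarkov (ω : Fin N → 𝒳) :
      {ω : Fin N → 𝒳 | L ≤ ∑ i, X (φ ∘ ω) (ω i)}.indicator (iidWeight w) ω ≤
        Real.exp (-L) * ∏ i, w (ω i) * Real.exp (X (φ ∘ ω) (ω i)) := by
    rw [Finset.prod_mul_distrib, ← Real.exp_sum, mul_left_comm, ← Real.exp_add]
    refine Set.indicator_apply_le' (fun hω => ?_) fun _ =>
      mul_nonneg (iidWeight_nonneg hw.1 ω) (Real.exp_pos _).le
    exact le_mul_of_one_le_right (iidWeight_nonneg hw.1 ω)
      (Real.one_le_exp (by linarith [show L ≤ ∑ i, X (φ ∘ ω) (ω i) from hω]))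
  calc _ ≤ ∑ ω : Fin N → 𝒳, Real.exp (-L) * ∏ i, w (ω i) * Real.exp (X (φ ∘ ω) (ω i)) :=
        Finset.sum_le_sum fun ω _ => hmarkov ω
    _ ≤ Real.exp (-L) := by
        rw [← Finset.mul_sum]
        exact mul_le_of_le_one_right (Real.exp_pos _).le
          (sum_prod_le_one_of_fiber hw (fun _ _ => (Real.exp_pos _).le) hX)

end IID

section Dataset

variable {𝒮 𝒜 ℬ : Type} [Fintype 𝒮] [Fintype 𝒜] [Fintype ℬ] {d : 𝒮 → 𝒜 → ℬ → ℝ}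
  {P : 𝒮 → 𝒜 → ℬ → 𝒮 → ℝ}

/-- The law of a single transition of the dataset. -/
def stepWeight (d : 𝒮 → 𝒜 → ℬ → ℝ) (P : 𝒮 → 𝒜 → ℬ → 𝒮 → ℝ) (x : 𝒮 × 𝒜 × ℬ × 𝒮) : ℝ :=
  d x.1 x.2.1 x.2.2.1 * P x.1 x.2.1 x.2.2.1 x.2.2.2

lemma stepWeight_mem_stdSimplex (hd : IsDist3 d) (hP : IsKernel P) :
    stepWeight d P ∈ stdSimplex ℝ (𝒮 × 𝒜 × ℬ × 𝒮) := by
  refine ⟨fun x => mul_nonneg (hd.1 _ _ _) ((hP _ _ _).1 _), ?_⟩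
  simp only [Fintype.sum_prod_type, stepWeight, ← Finset.mul_sum, (hP _ _ _).2, mul_one, hd.2]

end Dataset

/-! ### Bernstein's inequality conditionally on the erased dataset -/

section Bernstein

variable {𝒮 : Type} [Fintype 𝒮] {p f : 𝒮 → ℝ} {M q : ℝ}

/-- The deviation allowed by Bernstein's inequality for the empirical mean of `f` under `p`, when
`|f - Pexp p f| ≤ M` and `q` is the exponent per sample of the failure probability. -/
def bernsteinRadius (p f : 𝒮 → ℝ) (M q : ℝ) : ℝ := 2 * √(varP p f * q) + 2 * M * q

lemma Pexp_exp_sub_le_one (hp : p ∈ stdSimplex ℝ 𝒮) {lam : ℝ}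
    (h : ∀ t, |lam * (f t - Pexp p f)| ≤ 1) :
    Pexp p (fun t => Real.exp (lam * (f t - Pexp p f) - lam ^ 2 * varP p f)) ≤ 1 := by
  have hmgf : Pexp p (fun t => Real.exp (lam * (f t - Pexp p f))) ≤ 1 + lam ^ 2 * varP p f :=
    calc Pexp p (fun t => Real.exp (lam * (f t - Pexp p f)))
        ≤ Pexp p (fun t => 1 + lam * (f t - Pexp p f) + lam ^ 2 * (f t - Pexp p f) ^ 2) :=
          Pexp_mono hp fun t => by
            linarith [(abs_le.1 (Real.abs_exp_sub_one_sub_id_le (h t))).2,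
              mul_pow lam (f t - Pexp p f) 2]
      _ = 1 + lam ^ 2 * varP p f := by
          rw [Pexp_add, Pexp_add, Pexp_const hp, Pexp_const_mul, Pexp_const_mul, Pexp_sub,
            Pexp_const hp, sub_self, mul_zero, add_zero, ← varP_eq_Pexp_sq_sub hp]
  have hfactor : (fun t => Real.exp (lam * (f t - Pexp p f) - lam ^ 2 * varP p f)) =
      fun t => Real.exp (-(lam ^ 2 * varP p f)) * Real.exp (lam * (f t - Pexp p f)) := by
    ext t
    rw [← Real.exp_add, neg_add_eq_sub]
  calc _ = Real.exp (-(lam ^ 2 * varP p f)) *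
        Pexp p (fun t => Real.exp (lam * (f t - Pexp p f))) := by rw [hfactor, Pexp_const_mul]
    _ ≤ Real.exp (-(lam ^ 2 * varP p f)) * Real.exp (lam ^ 2 * varP p f) := by
        gcongr
        linarith [Real.add_one_le_exp (lam ^ 2 * varP p f)]
    _ = 1 := by rw [← Real.exp_add, neg_add_cancel, Real.exp_zero]

lemma exists_chernoff_parameter {v : ℝ} (hv : 0 ≤ v) (hq : 0 ≤ q) (hM : 0 < M) :
    ∃ lam, 0 ≤ lam ∧ lam * M ≤ 1 ∧
      ∀ x, 2 * √(v * q) + 2 * M * q ≤ x → q ≤ lam * x - lam ^ 2 * v := by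
  obtain rfl | hq := hq.eq_or_lt
  · exact ⟨0, le_rfl, by rw [zero_mul]; exact zero_le_one, by simp⟩
  have hr : 0 < √q := Real.sqrt_pos.2 hq
  have hMr : 0 < M * √q := mul_pos hM hr
  have hden : 0 < √v + M * √q := by positivity
  refine ⟨√q / (√v + M * √q), by positivity, ?_, fun x hx => ?_⟩
  · rw [div_mul_eq_mul_div, div_le_one hden, mul_comm]
    exact le_add_of_nonneg_left (Real.sqrt_nonneg v)
  set lam := √q / (√v + M * √q)
  have : 0 ≤ lam := by positivity
  have hlam : lam * (√v + M * √q) = √q := div_mul_cancel₀ _ hden.ne'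
  have hgain : 2 * q ≤ lam * x :=
    calc 2 * q = 2 * √q * (lam * (√v + M * √q)) := by rw [hlam, mul_assoc, Real.mul_self_sqrt hq.le]
      _ = lam * (2 * (√v * √q) + 2 * M * (√q * √q)) := by ring
      _ ≤ lam * x := by
        rw [← Real.sqrt_mul hv, Real.mul_self_sqrt hq.le]
        gcongr
  have hcost : lam ^ 2 * v ≤ q :=
    calc lam ^ 2 * v = (lam * √v) ^ 2 := by rw [mul_pow, Real.sq_sqrt hv]
      _ ≤ (lam * (√v + M * √q)) ^ 2 := by
        gcongr
        exact le_add_of_nonneg_right hMr.le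
      _ = q := by rw [hlam, Real.sq_sqrt hq.le]
  linarith

/-- The tilt is the exponent `λ (f - Pexp p f) - λ ^ 2 varP p f` of the Chernoff bound for an
optimised `λ`. -/
lemma exists_chernoff_tilt (hp : p ∈ stdSimplex ℝ 𝒮) (hM : 0 < M)
    (hf : ∀ t, |f t - Pexp p f| ≤ M) (hq : 0 ≤ q) :
    ∃ g : 𝒮 → ℝ, Pexp p (fun t => Real.exp (g t)) ≤ 1 ∧
      ∀ ph ∈ stdSimplex ℝ 𝒮, bernsteinRadius p f M q ≤ Pexp ph f - Pexp p f → q ≤ Pexp ph g := by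
  obtain ⟨lam, hlam0, hlamM, hlam⟩ := exists_chernoff_parameter (varP_nonneg hp f) hq hM
  refine ⟨fun t => lam * (f t - Pexp p f) - lam ^ 2 * varP p f,
    Pexp_exp_sub_le_one hp fun t => ?_, fun ph hph hdev => ?_⟩
  · rw [abs_mul, abs_of_nonneg hlam0]
    exact (mul_le_mul_of_nonneg_left (hf t) hlam0).trans hlamM
  · rw [Pexp_sub, Pexp_const_mul, Pexp_sub, Pexp_const hph, Pexp_const hph]
    exact hlam _ hdev

variable {𝒜 ℬ : Type} [Fintype 𝒜] [Fintype ℬ] [DecidableEq 𝒮] [DecidableEq 𝒜] [DecidableEq ℬ]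
  {N : ℕ} {d : 𝒮 → 𝒜 → ℬ → ℝ} {P : 𝒮 → 𝒜 → ℬ → 𝒮 → ℝ} {s : 𝒮} {a : 𝒜} {b : ℬ} {L : ℝ}

/-- Only the fibre over `(s, a, b, s)` has more than one point; there the sum is an expectation
under `P s a b`. -/
lemma sum_fiber_eraseNext_mul_exp_le (hd : IsDist3 d) (hP : IsKernel P) {g : 𝒮 → ℝ}
    (hg : Pexp (P s a b) (fun t => Real.exp (g t)) ≤ 1) (y : 𝒮 × 𝒜 × ℬ × 𝒮) :
    ∑ x with eraseNext s a b x = y,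
        stepWeight d P x * Real.exp (if StartsAt s a b x then g x.2.2.2 else 0) ≤
      ∑ x with eraseNext s a b x = y, stepWeight d P x := by
  by_cases hy : y = (s, a, b, s)
  · subst hy
    have hfiber : (Finset.univ.filter fun x => eraseNext s a b x = (s, a, b, s)) =
        Finset.univ.image fun t : 𝒮 => (s, a, b, t) := by
      ext x
      simp only [Finset.mem_filter_univ, eraseNext, Finset.mem_image,
        Finset.mem_univ, true_and, StartsAt, Prod.ext_iff]
      grind
    have hinj : Function.Injective fun t : 𝒮 => (s, a, b, t) := fun t t' => by simp
    rw [hfiber, Finset.sum_image hinj.injOn, Finset.sum_image hinj.injOn]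
    simp only [stepWeight, StartsAt, and_self, if_true, mul_assoc, ← Finset.mul_sum, (hP s a b).2]
    exact mul_le_mul_of_nonneg_left hg (hd.1 s a b)
  · refine le_of_eq (Finset.sum_congr rfl fun x hx => ?_)
    have hx : ¬StartsAt s a b x := fun h =>
      hy ((Finset.mem_filter.1 hx).2.symm.trans (if_pos h))
    rw [if_neg hx, Real.exp_zero, mul_one]

theorem dsProb_bernsteinRadius_le_sub_le (hd : IsDist3 d) (hP : IsKernel P) (hM : 0 < M)
    (hL : 0 ≤ L) {f : (Fin N → 𝒮 × 𝒜 × ℬ × 𝒮) → 𝒮 → ℝ}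
    (hf : ∀ E t, |f E t - Pexp (P s a b) (f E)| ≤ M) :
    dsProb d P {D | cnt D s a b ≠ 0 ∧
      bernsteinRadius (P s a b) (f (eraseNext s a b ∘ D)) M (L / cnt D s a b) ≤
        Pexp (Phat D s a b) (f (eraseNext s a b ∘ D)) -
          Pexp (P s a b) (f (eraseNext s a b ∘ D))} ≤ Real.exp (-L) := by
  choose g hgexp hg using fun E : Fin N → 𝒮 × 𝒜 × ℬ × 𝒮 =>
    exists_chernoff_tilt (hP s a b) hM (hf E) (div_nonneg hL (Nat.cast_nonneg (cnt E s a b)))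
  have hw := stepWeight_mem_stdSimplex hd hP
  refine le_trans (iidProb_mono hw.1 fun D hD => ?_) (iidProb_chernoff_of_fiber hw
    (fun E => sum_fiber_eraseNext_mul_exp_le hd hP (hgexp E)) L)
  obtain ⟨hcnt, hdev⟩ := hD
  have htilt := hg (eraseNext s a b ∘ D) (Phat D s a b) (Phat_isKernel D s a b)
  rw [cnt_eraseNext] at htilt
  calc L = cnt D s a b * (L / cnt D s a b) := (mul_div_cancel₀ L (Nat.cast_ne_zero.2 hcnt)).symm
    _ ≤ cnt D s a b * Pexp (Phat D s a b) (g (eraseNext s a b ∘ D)) := by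
      gcongr
      exact htilt hdev
    _ = _ := cnt_mul_Pexp_Phat hcnt _

theorem dsProb_bernsteinRadius_lt_abs_sub_le (hd : IsDist3 d) (hP : IsKernel P) (hM : 0 < M)
    (hL : 0 ≤ L) {f : (Fin N → 𝒮 × 𝒜 × ℬ × 𝒮) → 𝒮 → ℝ}
    (hf : ∀ E t, |f E t - Pexp (P s a b) (f E)| ≤ M) :
    dsProb d P {D | cnt D s a b ≠ 0 ∧
      bernsteinRadius (P s a b) (f (eraseNext s a b ∘ D)) M (L / cnt D s a b) <
        |Pexp (Phat D s a b) (f (eraseNext s a b ∘ D)) -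
          Pexp (P s a b) (f (eraseNext s a b ∘ D))|} ≤ 2 * Real.exp (-L) := by
  have hw := stepWeight_mem_stdSimplex hd hP
  have hneg := dsProb_bernsteinRadius_le_sub_le (f := fun E t => -f E t) hd hP hM hL fun E t => by
    rw [Pexp_neg, neg_sub_neg, abs_sub_comm]
    exact hf E t
  simp only [bernsteinRadius, varP_neg, Pexp_neg, neg_sub_neg] at hneg
  refine (iidProb_mono hw.1 ?_).trans ((iidProb_union_le hw.1 _ _).trans
    ((add_le_add (dsProb_bernsteinRadius_le_sub_le hd hP hM hL hf) hneg).trans_eq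
      (two_mul _).symm))
  rintro D ⟨hcnt, hdev⟩
  refine (lt_abs.1 hdev).imp (fun h => ⟨hcnt, h.le⟩) fun h => ⟨hcnt, ?_⟩
  rw [neg_sub] at h
  exact h.le

end Bernstein

section Concentration

variable {𝒮 : Type} [Fintype 𝒮]

/-- The means of `V` and of its squared deviation `(V - Pexp p V) ^ 2` under `ph` are as close to
those under `p` as Bernstein's inequality allows for `0 ≤ V ≤ H`. -/
structure Concentrates (ph p V : 𝒮 → ℝ) (H q : ℝ) : Prop where
  mean : |Pexp ph V - Pexp p V| ≤ bernsteinRadius p V H q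
  sqDev : |Pexp ph (fun t => (V t - Pexp p V) ^ 2) - Pexp p (fun t => (V t - Pexp p V) ^ 2)| ≤
    bernsteinRadius p (fun t => (V t - Pexp p V) ^ 2) (H ^ 2) q

variable {𝒜 ℬ : Type} [Fintype 𝒜] [Fintype ℬ] [DecidableEq 𝒮] [DecidableEq 𝒜] [DecidableEq ℬ]
  {N : ℕ} {d : 𝒮 → 𝒜 → ℬ → ℝ} {P : 𝒮 → 𝒜 → ℬ → 𝒮 → ℝ} {s : 𝒮} {a : 𝒜} {b : ℬ} {H L : ℝ}

theorem dsProb_not_concentrates_le (hd : IsDist3 d) (hP : IsKernel P) (hH : 0 < H) (hL : 0 ≤ L)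
    {F : (Fin N → 𝒮 × 𝒜 × ℬ × 𝒮) → 𝒮 → ℝ} (hF : ∀ E t, F E t ∈ Set.Icc 0 H) :
    dsProb d P {D | cnt D s a b ≠ 0 ∧ ¬Concentrates (Phat D s a b) (P s a b)
      (F (eraseNext s a b ∘ D)) H (L / cnt D s a b)} ≤ 4 * Real.exp (-L) := by
  have hp := hP s a b
  have hw := stepWeight_mem_stdSimplex hd hP
  have hmean := dsProb_bernsteinRadius_lt_abs_sub_le hd hP hH hL
    fun E => abs_sub_Pexp_le hp (hF E)
  have hsq (E) (t : 𝒮) : (F E t - Pexp (P s a b) (F E)) ^ 2 ∈ Set.Icc 0 (H ^ 2) :=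
    ⟨sq_nonneg _, sq_le_sq.2 ((abs_sub_Pexp_le hp (hF E) t).trans (le_abs_self H))⟩
  have hsqDev := dsProb_bernsteinRadius_lt_abs_sub_le hd hP (pow_pos hH 2) hL
    fun E => abs_sub_Pexp_le hp (hsq E)
  refine (iidProb_mono hw.1 ?_).trans ((iidProb_union_le hw.1 _ _).trans
    ((add_le_add hmean hsqDev).trans_eq (by ring)))
  rintro D ⟨hcnt, hnot⟩
  by_contra hgood
  simp only [Set.mem_union, Set.mem_ofPred_eq, hcnt, ne_eq, not_false_eq_true, true_and, not_or,
    not_lt] at hgood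
  exact hnot ⟨hgood.1, hgood.2⟩

end Concentration

/-! ### From concentration to empirical Bernstein bounds -/

section Empirical

variable {𝒮 : Type} [Fintype 𝒮] {ph p V V₀ : 𝒮 → ℝ} {H q : ℝ}

lemma two_mul_sqrt_mul_le {x q : ℝ} (hx : 0 ≤ x) (hq : 0 ≤ q) :
    2 * √(x * q) ≤ x / 4 + 4 * q := by
  rw [Real.sqrt_mul hx]
  linarith [Real.sq_sqrt hx, Real.sq_sqrt hq, sq_nonneg (√x / 2 - 2 * √q)]

lemma mul_bernsteinRadius_le (hp : p ∈ stdSimplex ℝ 𝒮) (hH : 0 ≤ H) (hq : 0 ≤ q) :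
    H * bernsteinRadius p V H q ≤ varP p V / 4 + 6 * (H ^ 2 * q) :=
  calc H * bernsteinRadius p V H q
      = 2 * √(varP p V * (H ^ 2 * q)) + 2 * (H ^ 2 * q) := by
        rw [mul_left_comm, Real.sqrt_mul (sq_nonneg H), Real.sqrt_sq hH, bernsteinRadius]
        ring
    _ ≤ varP p V / 4 + 6 * (H ^ 2 * q) := by
        linarith [two_mul_sqrt_mul_le (varP_nonneg hp V) (show 0 ≤ H ^ 2 * q by positivity)]

lemma bernsteinRadius_sqDev_le (hp : p ∈ stdSimplex ℝ 𝒮) (hq : 0 ≤ q)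
    (hV : ∀ t, |V t - Pexp p V| ≤ H) :
    bernsteinRadius p (fun t => (V t - Pexp p V) ^ 2) (H ^ 2) q ≤
      varP p V / 4 + 6 * (H ^ 2 * q) :=
  calc bernsteinRadius p (fun t => (V t - Pexp p V) ^ 2) (H ^ 2) q
      ≤ 2 * √(H ^ 2 * varP p V * q) + 2 * H ^ 2 * q := by
        unfold bernsteinRadius
        gcongr
        exact varP_sq_sub_Pexp_le hp hV
    _ = 2 * √(varP p V * (H ^ 2 * q)) + 2 * (H ^ 2 * q) := by ring_nf
    _ ≤ varP p V / 4 + 6 * (H ^ 2 * q) := by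
        linarith [two_mul_sqrt_mul_le (varP_nonneg hp V) (show 0 ≤ H ^ 2 * q by positivity)]

lemma Concentrates.varP_bounds (h : Concentrates ph p V H q) (hph : ph ∈ stdSimplex ℝ 𝒮)
    (hp : p ∈ stdSimplex ℝ 𝒮) (hH : 0 ≤ H) (hq : 0 ≤ q) (hV : ∀ t, V t ∈ Set.Icc 0 H) :
    varP ph V ≤ 5 / 4 * varP p V + 6 * (H ^ 2 * q) ∧
      varP p V ≤ 2 * varP ph V + 24 * (H ^ 2 * q) := by
  have hsq : |varP ph V + (Pexp ph V - Pexp p V) ^ 2 - varP p V| ≤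
      varP p V / 4 + 6 * (H ^ 2 * q) := by
    have hsqDev := h.sqDev
    rw [Pexp_sq_sub hph, ← varP_eq_Pexp_sq_sub hp] at hsqDev
    exact hsqDev.trans (bernsteinRadius_sqDev_le hp hq (abs_sub_Pexp_le hp hV))
  have hdiff : |Pexp ph V - Pexp p V| ≤ H := by
    obtain ⟨hph0, hphH⟩ := Pexp_mem_Icc hph hV
    obtain ⟨hp0, hpH⟩ := Pexp_mem_Icc hp hV
    exact abs_le.2 ⟨by linarith, by linarith⟩
  have hbias : (Pexp ph V - Pexp p V) ^ 2 ≤ varP p V / 4 + 6 * (H ^ 2 * q) :=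
    calc (Pexp ph V - Pexp p V) ^ 2 = |Pexp ph V - Pexp p V| * |Pexp ph V - Pexp p V| := by
          rw [← sq, sq_abs]
      _ ≤ H * bernsteinRadius p V H q := mul_le_mul hdiff h.mean (abs_nonneg _) hH
      _ ≤ _ := mul_bernsteinRadius_le hp hH hq
  obtain ⟨hlow, hupp⟩ := abs_le.1 hsq
  exact ⟨by linarith [sq_nonneg (Pexp ph V - Pexp p V)], by linarith⟩

lemma sqrt_mul_le_of_le_mul_add {v w A B : ℝ} (hw : 0 ≤ w) (hq : 0 ≤ q) (hH : 0 ≤ H) (hA : 0 ≤ A)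
    (hB : 0 ≤ B) (h : v ≤ A ^ 2 * w + B ^ 2 * (H ^ 2 * q)) :
    √(v * q) ≤ A * √(w * q) + B * (H * q) := by
  refine Real.sqrt_le_iff.2 ⟨by positivity, ?_⟩
  calc v * q ≤ (A ^ 2 * w + B ^ 2 * (H ^ 2 * q)) * q := by gcongr
    _ = (A * √(w * q)) ^ 2 + (B * (H * q)) ^ 2 := by
      rw [mul_pow, Real.sq_sqrt (mul_nonneg hw hq)]
      ring
    _ ≤ (A * √(w * q) + B * (H * q)) ^ 2 := by
      rw [add_sq']
      exact le_add_of_nonneg_right (by positivity)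

lemma Concentrates.abs_Pexp_sub_le (h : Concentrates ph p V H q) (hph : ph ∈ stdSimplex ℝ 𝒮)
    (hp : p ∈ stdSimplex ℝ 𝒮) (hH : 0 ≤ H) (hq : 0 ≤ q) (hV : ∀ t, V t ∈ Set.Icc 0 H) :
    |Pexp ph V - Pexp p V| ≤ 3 * √(varP ph V * q) + 12 * (H * q) := by
  have hvar := (h.varP_bounds hph hp hH hq hV).2
  have hvh := varP_nonneg hph V
  have hsqrt : √(varP p V * q) ≤ 3 / 2 * √(varP ph V * q) + 5 * (H * q) :=
    sqrt_mul_le_of_le_mul_add hvh hq hH (by norm_num) (by norm_num)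
      (by linarith [show 0 ≤ H ^ 2 * q by positivity])
  have hmean := h.mean
  rw [bernsteinRadius] at hmean
  linarith

lemma Concentrates.abs_Pexp_sub_le_of_dist_le {η : ℝ} (h : Concentrates ph p V₀ H q)
    (hph : ph ∈ stdSimplex ℝ 𝒮) (hp : p ∈ stdSimplex ℝ 𝒮) (hH : 0 ≤ H) (hq : 0 ≤ q)
    (hV₀ : ∀ t, V₀ t ∈ Set.Icc 0 H) (hη : η ^ 2 ≤ H ^ 2 * q) (hη' : η ≤ H * q)
    (hV : dist V V₀ ≤ η) :
    |Pexp ph V - Pexp p V| ≤ 4 * √(varP ph V * q) + 21 * (H * q) := by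
  have hvar := varP_le_of_dist_le hph ((dist_comm V₀ V).trans_le hV)
  have hvh := varP_nonneg hph V
  have hsqrt : √(varP ph V₀ * q) ≤ 4 / 3 * √(varP ph V * q) + 7 / 3 * (H * q) :=
    sqrt_mul_le_of_le_mul_add hvh hq hH (by norm_num) (by norm_num)
      (by linarith [show 0 ≤ H ^ 2 * q by positivity])
  calc |Pexp ph V - Pexp p V|
      ≤ |Pexp ph V - Pexp ph V₀| + |Pexp ph V₀ - Pexp p V₀| + |Pexp p V₀ - Pexp p V| := by
        refine (abs_sub_le _ (Pexp p V₀) _).trans ?_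
        gcongr
        exact abs_sub_le _ _ _
    _ ≤ η + (3 * √(varP ph V₀ * q) + 12 * (H * q)) + η := by
        gcongr
        · exact (abs_Pexp_sub_le_dist hph V V₀).trans hV
        · exact h.abs_Pexp_sub_le hph hp hH hq hV₀
        · exact (abs_Pexp_sub_le_dist hp V₀ V).trans ((dist_comm V₀ V).trans_le hV)
    _ ≤ 4 * √(varP ph V * q) + 21 * (H * q) := by linarith

lemma Concentrates.varP_le_of_dist_le {η : ℝ} (h : Concentrates ph p V₀ H q)
    (hph : ph ∈ stdSimplex ℝ 𝒮) (hp : p ∈ stdSimplex ℝ 𝒮) (hH : 0 ≤ H) (hq : 0 ≤ q)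
    (hV₀ : ∀ t, V₀ t ∈ Set.Icc 0 H) (hη : η ^ 2 ≤ H ^ 2 * q) (hV : dist V V₀ ≤ η) :
    varP ph V ≤ 2 * varP p V + 21 * (H ^ 2 * q) := by
  have hph_var := ZSMG.varP_le_of_dist_le hph hV
  have hp_var := ZSMG.varP_le_of_dist_le hp ((dist_comm V₀ V).trans_le hV)
  linarith [(h.varP_bounds hph hp hH hq hV₀).1, varP_nonneg hp V,
    show 0 ≤ H ^ 2 * q by positivity]

/-- The two conclusions of the leave-one-out lemma for a value vector `V`: `ph` is the empirical
distribution of `n` samples from `p` and `l` is the logarithmic confidence term. -/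
def EmpiricalBernsteinBounds (C γ l : ℝ) (n : ℕ) (ph p V : 𝒮 → ℝ) : Prop :=
  |Pexp ph V - Pexp p V| ≤ C * (√(varP ph V * l / n) + l / ((1 - γ) * n)) ∧
    varP ph V ≤ 2 * varP p V + C * l / ((1 - γ) ^ 2 * n)

lemma Concentrates.empiricalBernsteinBounds {γ l : ℝ} {n N : ℕ}
    (h : Concentrates ph p V₀ (1 / (1 - γ)) (5 * l / n)) (hph : ph ∈ stdSimplex ℝ 𝒮)
    (hp : p ∈ stdSimplex ℝ 𝒮) (hγ2 : 1 / 2 ≤ γ) (hγ : γ < 1) (hl : 1 / 2 ≤ l) (hn : n ≠ 0)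
    (hnN : n ≤ N) (hV₀ : ∀ t, V₀ t ∈ Set.Icc 0 (1 / (1 - γ))) (hV : dist V V₀ ≤ 2 / N) :
    EmpiricalBernsteinBounds 105 γ l n ph p V := by
  have hn1 : (1 : ℝ) ≤ n := mod_cast Nat.one_le_iff_ne_zero.2 hn
  have : (0 : ℝ) < n := by linarith
  have hγ0 : 0 < 1 - γ := sub_pos.2 hγ
  have hH : 2 ≤ 1 / (1 - γ) := by rw [le_div_iff₀ hγ0]; linarith
  have hV : dist V V₀ ≤ 2 / n := hV.trans (by gcongr)
  have hη : 2 / (n : ℝ) ≤ 1 / (1 - γ) * (5 * l / n) := by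
    rw [← mul_div_assoc]
    gcongr
    nlinarith
  have hη2 : (2 / (n : ℝ)) ^ 2 ≤ (1 / (1 - γ)) ^ 2 * (5 * l / n) := by
    have : 2 / (n : ℝ) ≤ 1 / (1 - γ) := (div_le_self two_pos.le hn1).trans hH
    rw [sq, sq, mul_assoc]
    gcongr
  have hq : 0 ≤ 5 * l / n := by positivity
  constructor
  · have hscale : 21 * (1 / (1 - γ) * (5 * l / n)) = 105 * (l / ((1 - γ) * n)) := by
      field_simp
      ring
    have hsqrt5 : √5 ≤ 3 := Real.sqrt_le_iff.2 (by norm_num)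
    calc |Pexp ph V - Pexp p V|
        ≤ 4 * √(varP ph V * (5 * l / n)) + 21 * (1 / (1 - γ) * (5 * l / n)) :=
          h.abs_Pexp_sub_le_of_dist_le hph hp (by linarith) hq hV₀ hη2 hη hV
      _ = 4 * (√5 * √(varP ph V * l / n)) + 105 * (l / ((1 - γ) * n)) := by
          rw [← Real.sqrt_mul (by norm_num), hscale, mul_div_assoc, mul_div_assoc,
            mul_left_comm]
      _ ≤ 105 * (√(varP ph V * l / n) + l / ((1 - γ) * n)) := by
          linarith [mul_le_mul_of_nonneg_right hsqrt5 (Real.sqrt_nonneg (varP ph V * l / n)),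
            Real.sqrt_nonneg (varP ph V * l / n)]
  · refine (h.varP_le_of_dist_le hph hp (by linarith) hq hV₀ hη2 hV).trans_eq ?_
    field_simp
    ring

end Empirical

/-! ### The leave-one-out theorem -/

section LeaveOneOutTheorem

variable {γ δ : ℝ} {N : ℕ}

lemma two_le_div_one_sub_mul (hγ2 : 1 / 2 ≤ γ) (hγ : γ < 1) (hδ : δ ∈ Set.Ioo 0 1) (hN : N ≠ 0) :
    2 ≤ (N : ℝ) / ((1 - γ) * δ) := by
  have hN1 : (1 : ℝ) ≤ N := mod_cast Nat.one_le_iff_ne_zero.2 hN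
  rw [le_div_iff₀ (mul_pos (sub_pos.2 hγ) hδ.1)]
  nlinarith [hδ.1, hδ.2]

lemma half_le_log_div_one_sub_mul (hγ2 : 1 / 2 ≤ γ) (hγ : γ < 1) (hδ : δ ∈ Set.Ioo 0 1)
    (hN : N ≠ 0) : 1 / 2 ≤ Real.log ((N : ℝ) / ((1 - γ) * δ)) := by
  linarith [Real.log_two_gt_d9,
    Real.log_le_log two_pos (two_le_div_one_sub_mul hγ2 hγ hδ hN)]

lemma log_div_one_sub_mul_nonneg (hγ2 : 1 / 2 ≤ γ) (hγ : γ < 1) (hδ : δ ∈ Set.Ioo 0 1) (N : ℕ) :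
    0 ≤ Real.log ((N : ℝ) / ((1 - γ) * δ)) := by
  rcases eq_or_ne N 0 with rfl | hN
  · simp
  · linarith [half_le_log_div_one_sub_mul hγ2 hγ hδ hN]

lemma grid_card_mul_exp_neg_le (hγ2 : 1 / 2 ≤ γ) (hγ : γ < 1) (hδ : δ ∈ Set.Ioo 0 1) (hN : N ≠ 0) :
    ((⌊1 / (1 - γ) / (1 / N)⌋₊ + 1 : ℕ) : ℝ) *
      (4 * Real.exp (-(5 * Real.log ((N : ℝ) / ((1 - γ) * δ))))) ≤ δ / 2 := by
  have hx := two_le_div_one_sub_mul hγ2 hγ hδ hN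
  set x := (N : ℝ) / ((1 - γ) * δ) with hxdef
  have hx0 : 0 < x := by linarith
  have hratio : 1 / (1 - γ) / (1 / N) = δ * x := by
    rw [hxdef]
    field_simp [(sub_pos.2 hγ).ne', hδ.1.ne']
  have hone : 1 ≤ δ * x := by
    have hN1 : (1 : ℝ) ≤ N := mod_cast Nat.one_le_iff_ne_zero.2 hN
    rw [← hratio, div_div, mul_one_div, one_div_div, one_le_div (sub_pos.2 hγ)]
    linarith
  have hcard : ((⌊δ * x⌋₊ + 1 : ℕ) : ℝ) ≤ 2 * (δ * x) := by
    push_cast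
    linarith [Nat.floor_le (zero_le_one.trans hone)]
  have hexp : Real.exp (-(5 * Real.log x)) = (x ^ 5)⁻¹ := by
    rw [Real.exp_neg, mul_comm, Real.exp_mul, Real.exp_log hx0]
    norm_cast
  rw [hratio, hexp]
  calc _ ≤ 2 * (δ * x) * (4 * (x ^ 5)⁻¹) := by gcongr
    _ = 8 * δ * (x ^ 4)⁻¹ := by field_simp; ring
    _ ≤ 8 * δ * (2 ^ 4)⁻¹ := by
      gcongr
      linarith [hδ.1]
    _ = δ / 2 := by ring

variable {𝒮 𝒜 ℬ : Type} [Fintype 𝒮]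

lemma supNormS_sub_eq_dist (V W : 𝒮 → ℝ) : supNormS (fun s => V s - W s) = dist V W :=
  le_antisymm (Real.iSup_le (dist_le_pi_dist V W) dist_nonneg)
    ((dist_pi_le_iff (Real.iSup_nonneg fun _ => abs_nonneg _)).2
      (le_ciSup (f := fun s => |V s - W s|) (Set.finite_range _).bddAbove))

variable [Fintype 𝒜] [Fintype ℬ] [DecidableEq 𝒮] [DecidableEq 𝒜] [DecidableEq ℬ]
  {P : 𝒮 → 𝒜 → ℬ → 𝒮 → ℝ} {d : 𝒮 → 𝒜 → ℬ → ℝ} {s : 𝒮} {a : 𝒜} {b : ℬ}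
  {T : (Fin N → 𝒮 × 𝒜 × ℬ × 𝒮) → (𝒮 → 𝒜 → ℬ → ℝ) → 𝒮 → 𝒜 → ℬ → ℝ}

theorem dsProb_fixedPoint_not_empiricalBernsteinBounds_le (hγ2 : 1 / 2 ≤ γ) (hγ : γ < 1)
    (hδ : δ ∈ Set.Ioo 0 1) (hd : IsDist3 d) (hP : IsKernel P)
    (hT : IsLeaveOneOutContraction T γ (1 / (1 - γ)) s a b) :
    dsProb d P {D | cnt D s a b ≠ 0 ∧ ∃ Q ∈ qBox 𝒮 𝒜 ℬ (1 / (1 - γ)), T D Q = Q ∧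
      ∃ V, dist V (valQ Q) ≤ 1 / N ∧ ¬EmpiricalBernsteinBounds 105 γ
        (Real.log (N / ((1 - γ) * δ))) (cnt D s a b) (Phat D s a b) (P s a b) V} ≤ δ / 2 := by
  have : Nonempty 𝒜 := ⟨a⟩
  have : Nonempty ℬ := ⟨b⟩
  rcases eq_or_ne N 0 with rfl | hN
  · refine le_trans (le_of_eq ?_) (half_pos hδ.1).le
    exact Finset.sum_eq_zero fun D _ =>
      Set.indicator_of_notMem (fun hD => hD.1 (Nat.le_zero.1 (cnt_le D s a b))) _
  have hw := stepWeight_mem_stdSimplex hd hP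
  have hH : 0 < 1 / (1 - γ) := one_div_pos.2 (sub_pos.2 hγ)
  have hε : 0 < 1 / (N : ℝ) := by positivity
  have hl := half_le_log_div_one_sub_mul hγ2 hγ hδ hN
  choose F hF hcover using fun E =>
    exists_grid_of_contraction (by linarith) hγ hH.le hε (hT.dist_le E) s a b
  have hfail (k) := dsProb_not_concentrates_le (s := s) (a := a) (b := b)
    (L := 5 * Real.log (N / ((1 - γ) * δ))) hd hP hH (by linarith)
    fun E => valQ_mem_Icc (hF E k)
  refine (iidProb_mono hw.1 ?_).trans ((iidProb_iUnion_le hw.1 _).trans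
    ((Finset.sum_le_sum fun k _ => hfail k).trans ?_))
  · rintro D ⟨hcnt, Q, hQ, hfix, V, hV, hnot⟩
    obtain ⟨k, hk⟩ := hcover _ Q hQ (hT.isFixedOff hfix)
    have hVk : dist V (valQ (F (eraseNext s a b ∘ D) k)) ≤ 2 / N :=
      calc _ ≤ dist V (valQ Q) + dist (valQ Q) (valQ (F (eraseNext s a b ∘ D) k)) :=
            dist_triangle _ _ _
        _ ≤ 1 / N + 1 / N := add_le_add hV ((dist_valQ_le _ _).trans hk)
        _ = 2 / N := by ring
    exact Set.mem_iUnion.2 ⟨k, hcnt, fun hconc => hnot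
      (hconc.empiricalBernsteinBounds (Phat_isKernel D s a b) (hP s a b) hγ2 hγ hl hcnt
        (cnt_le D s a b) (valQ_mem_Icc (hF _ k)) hVk)⟩
  · rw [Finset.sum_const, Finset.card_univ, Fintype.card_fin, nsmul_eq_mul]
    exact grid_card_mul_exp_neg_le hγ2 hγ hδ hN

end LeaveOneOutTheorem

end ZSMG

open ZSMG in
theorem statement6_general {𝒮 𝒜 ℬ : Type} [Fintype 𝒮] [Fintype 𝒜] [Fintype ℬ]
    [DecidableEq 𝒮] [DecidableEq 𝒜] [DecidableEq ℬ] {γ δ Cb : ℝ} (hγ2 : 1 / 2 ≤ γ) (hγ : γ < 1)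
    (hδ : δ ∈ Set.Ioo 0 1) (hCb : 0 ≤ Cb) {P : 𝒮 → 𝒜 → ℬ → 𝒮 → ℝ} (hP : IsKernel P)
    (r : 𝒮 → 𝒜 → ℬ → ℝ) {db : 𝒮 → 𝒜 → ℬ → ℝ} (hdb : IsDist3 db) (N : ℕ) (s : 𝒮) (a : 𝒜) (b : ℬ) :
    1 - δ ≤ dsProb db P {D : Fin N → 𝒮 × 𝒜 × ℬ × 𝒮 | 1 ≤ cnt D s a b →
      ∀ Q ∈ qBox 𝒮 𝒜 ℬ (1 / (1 - γ)),
        (TpeMinus γ δ Cb N (cnt D) (Phat D) (rhat r D) Q = Q ∨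
          TpePlus γ δ Cb N (cnt D) (Phat D) (rhat r D) Q = Q) →
        ∀ V, dist V (valQ Q) ≤ 1 / N → EmpiricalBernsteinBounds 105 γ
          (Real.log (N / ((1 - γ) * δ))) (cnt D s a b) (Phat D s a b) (P s a b) V} := by
  have hw := stepWeight_mem_stdSimplex hdb hP
  have hlog := log_div_one_sub_mul_nonneg hγ2 hγ hδ N
  have hminus := dsProb_fixedPoint_not_empiricalBernsteinBounds_le hγ2 hγ hδ hdb hP
    (isLeaveOneOutContraction_TpeMinus hγ2 hγ hCb hlog r s a b)
  have hplus := dsProb_fixedPoint_not_empiricalBernsteinBounds_le hγ2 hγ hδ hdb hP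
    (isLeaveOneOutContraction_TpePlus hγ2 hγ hCb hlog r s a b)
  have hfail := (iidProb_union_le hw.1 _ _).trans (add_le_add hminus hplus)
  rw [add_halves] at hfail
  refine ((sub_le_sub_left hfail 1).trans_eq (iidProb_compl hw _).symm).trans
    (iidProb_mono hw.1 fun D hD hcnt Q hQ hfix V hV => ?_)
  by_contra hnot
  have hcnt := Nat.one_le_iff_ne_zero.1 hcnt
  exact hD (hfix.imp (fun h => ⟨hcnt, Q, hQ, h, V, hV, hnot⟩)
    fun h => ⟨hcnt, Q, hQ, h, V, hV, hnot⟩)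

open ZSMG in
/-- Lemma 3, leave-one-out: Bernstein-type bound on
`(P̂ − P)Ṽ` and closeness of the empirical variance, uniformly over all `Ṽ`
close to the value functions of the fixed points of the pessimistic operators. -/
theorem statement6 :
    ∃ Cb : ℝ, 0 < Cb ∧ ∃ C : ℝ, 0 < C ∧
      ∀ (𝒮 𝒜 ℬ : Type) [Fintype 𝒮] [Fintype 𝒜] [Fintype ℬ]
        [DecidableEq 𝒮] [DecidableEq 𝒜] [DecidableEq ℬ]
        [Nonempty 𝒮] [Nonempty 𝒜] [Nonempty ℬ],
      ∀ γ δ : ℝ, 1 / 2 ≤ γ → γ < 1 → δ ∈ Set.Ioo (0 : ℝ) 1 →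
      ∀ P : 𝒮 → 𝒜 → ℬ → 𝒮 → ℝ, IsKernel P →
      ∀ r : 𝒮 → 𝒜 → ℬ → ℝ, IsReward r →
      ∀ db : 𝒮 → 𝒜 → ℬ → ℝ, IsDist3 db →
      ∀ N : ℕ, ∀ (s : 𝒮) (a : 𝒜) (b : ℬ),
        1 - δ ≤ dsProb db P {D : Fin N → 𝒮 × 𝒜 × ℬ × 𝒮 |
          1 ≤ cnt D s a b →
          ∀ Qm Qp : 𝒮 → 𝒜 → ℬ → ℝ,
            (∀ s' a' b', Qm s' a' b' ∈ Set.Icc (0 : ℝ) (1 / (1 - γ))) →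
            TpeMinus γ δ Cb N (cnt D) (Phat D) (rhat r D) Qm = Qm →
            (∀ s' a' b', Qp s' a' b' ∈ Set.Icc (0 : ℝ) (1 / (1 - γ))) →
            TpePlus γ δ Cb N (cnt D) (Phat D) (rhat r D) Qp = Qp →
          ∀ V : 𝒮 → ℝ,
            (∀ s', V s' ∈ Set.Icc (0 : ℝ) (1 / (1 - γ))) →
            min (supNormS fun s' => V s' - valQ Qm s')
                (supNormS fun s' => V s' - valQ Qp s') ≤ 1 / (N : ℝ) →
            |Pexp (Phat D s a b) V - Pexp (P s a b) V| ≤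
              C * (Real.sqrt (varP (Phat D s a b) V *
                    Real.log ((N : ℝ) / ((1 - γ) * δ)) / (cnt D s a b : ℝ))
                + Real.log ((N : ℝ) / ((1 - γ) * δ)) / ((1 - γ) * (cnt D s a b : ℝ))) ∧
            varP (Phat D s a b) V ≤ 2 * varP (P s a b) V +
              C * Real.log ((N : ℝ) / ((1 - γ) * δ)) / ((1 - γ) ^ 2 * (cnt D s a b : ℝ))} := by
  refine ⟨1, one_pos, 105, by norm_num, ?_⟩
  intro 𝒮 𝒜 ℬ _ _ _ _ _ _ _ _ _ γ δ hγ2 hγ hδ P hP r _ db hdb N s a b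
  refine (statement6_general hγ2 hγ hδ one_pos.le hP r hdb N s a b).trans
    (iidProb_mono (stepWeight_mem_stdSimplex hdb hP).1
      fun D hD hcnt Qm Qp hQm hfixm hQp hfixp V _ hclose => ?_)
  simp only [supNormS_sub_eq_dist] at hclose
  exact (min_le_iff.1 hclose).elim (hD hcnt Qm hQm (.inl hfixm) V) (hD hcnt Qp hQp (.inr hfixp) V)
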